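/- arXiv:1304.0745 — 2 statements merged into one kernel-verified Lean document; each statement's English description precedes it below -/
import Mathlib

section
/- Let R be a polynomial ring over an algebraically closed field K. Let I be an ideal of R of height two generated by quadrics, and suppose I is contained in a prime ideal p with ht(p) = 2 and e(R/p) = 3. Then pd(R/I) = 2; in particular R/I is Cohen–Macaulay. -/
open MvPolynomial Filter

universe u

/-- `PdLE R n M` means the `R`-module `M` has projective dimension at most `n`:
either `M` is projective (`n = 0`), or `M` is a quotient of a free module by a
submodule of projective dimension at most `n - 1`. -/
def PdLE (R : Type u) [CommRing R] : ℕ → (M : Type u) → [AddCommGroup M] → [Module R M] → Prop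
  | 0, M, _, _ => Module.Projective R M
  | n + 1, M, _, _ => ∃ (F : Type u) (_ : AddCommGroup F) (_ : Module R F),
      Module.Free R F ∧ ∃ f : F →ₗ[R] M, Function.Surjective f ∧ PdLE R n (LinearMap.ker f)

/-- The projective dimension of an `R`-module `M`, as an element of `ℕ∞`
(`⊤` if `M` has no finite free resolution). -/
noncomputable def projDim (R : Type u) [CommRing R] (M : Type u) [AddCommGroup M]
    [Module R M] : ℕ∞ :=
  sInf ((fun n : ℕ => (n : ℕ∞)) '' {n : ℕ | PdLE R n M})

/-- The height of an ideal: the infimum of the heights of the prime ideals containing it. -/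
noncomputable def idealHeight {R : Type*} [CommRing R] (I : Ideal R) : ℕ∞ :=
  ⨅ p ∈ {p : PrimeSpectrum R | I ≤ p.asIdeal}, Order.height p

/-- The length of a module, defined as the Krull dimension of its lattice of submodules. -/
noncomputable def moduleLength (R : Type u) [CommRing R] (M : Type u) [AddCommGroup M]
    [Module R M] : WithBot ℕ∞ :=
  Order.krullDim (Submodule R M)

/-- `IsHSMultiplicity R mx I e` asserts that the Hilbert–Samuel multiplicity of `R/I`
with respect to the ideal `mx` equals `e`: for `d = dim R/I` there is a polynomial `P`
of degree `d` with `e = d! · (leading coefficient of P)` such that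
`length (R/(I + mx^n)) = P(n)` for all large `n`. -/
def IsHSMultiplicity (R : Type u) [CommRing R] (mx I : Ideal R) (e : ℕ) : Prop :=
  ∃ (d : ℕ) (P : Polynomial ℚ),
    ringKrullDim (R ⧸ I) = (d : WithBot ℕ∞) ∧
    P.natDegree = d ∧
    (e : ℚ) = P.leadingCoeff * d.factorial ∧
    ∀ᶠ n : ℕ in Filter.atTop, ∃ k : ℕ, (k : ℚ) = P.eval (n : ℚ) ∧
      moduleLength R (R ⧸ (I ⊔ mx ^ n)) = ((k : ℕ∞) : WithBot ℕ∞)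

/-- A matrix over a `K`-algebra is `1`-generic if it has no generalized zero entry:
for every nonzero vectors `u`, `v` of scalars, `uᵀ M v ≠ 0`. -/
def OneGeneric (K : Type*) [Field K] {R : Type u} [CommRing R] [Algebra K R]
    {m l : ℕ} (M : Matrix (Fin m) (Fin l) R) : Prop :=
  ∀ (u : Fin m → K) (v : Fin l → K), u ≠ 0 → v ≠ 0 →
    ∑ i, ∑ j, algebraMap K R (u i * v j) * M i j ≠ 0

/-- The ideal of all `2 × 2` minors of a `2 × l` matrix. -/
def minors2 {R : Type u} [CommRing R] {l : ℕ} (M : Matrix (Fin 2) (Fin l) R) : Ideal R :=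
  Ideal.span (Set.range fun p : Fin l × Fin l => M 0 p.1 * M 1 p.2 - M 0 p.2 * M 1 p.1)

/-- The homogeneous maximal ideal of a polynomial ring. -/
noncomputable def maxIdeal (K : Type*) [Field K] (σ : Type*) : Ideal (MvPolynomial σ K) :=
  Ideal.span (Set.range (X : σ → MvPolynomial σ K))

/-- The ideal represented by minors by the `2 × (n+1)` matrix with first column `(x, y)ᵀ`
and remaining columns `(u j, v j)ᵀ`: it is generated by the `2 × 2` minors involving
the first column. -/
def repByMinors {R : Type u} [CommRing R] {n : ℕ} (x y : R) (u v : Fin n → R) : Ideal R :=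
  Ideal.span (Set.range fun j : Fin n => x * v j - y * u j)

/-!
Choose a regular sequence `f₁, f₂` of quadrics in the `K`-span of the generators of `I`, and
coordinates in which, on the plane of the first two of them `X, Y`, the two quadrics become
`X ^ 2 + b * X * Y` and `Y ^ 2 + β * X * Y` with `b * β ≠ 1`. Let `A` be the polynomial ring in the
remaining variables. Then `R ⧸ (f₁, f₂)` is a torsion-free `A`-module spanned by `1, X, Y, X * Y`,
so its rank is at most four, while the rank of `R ⧸ p` is at least its multiplicity. Hence the
kernel `p ⧸ (f₁, f₂)` of the quotient map has rank at most one, and since `A` is integrally closed,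
`X` and `Y` act on it as elements of `A`. In degree one this gives independent linear forms `x` and
`y` with `x * I` and `y * I` contained in `(f₁, f₂)`.

For a quadric `q` of `I`, write `x * q = a * f₁ + b * f₂` and `y * q = c * f₁ + d * f₂`. Comparing
coefficients, `x * d - y * b = s * f₁` and `y * a - x * c = s * f₂` for a scalar `s`, and `q` lies
in `(f₁, f₂)` when `s = 0`. So either `I = (f₁, f₂)`, or `I = (f₁, f₂, q)` for any one `q` with
`s ≠ 0`, and then the Hilbert–Burch matrix with rows `(a, b, -x)` and `(c, d, -y)` resolves `R ⧸ I`.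
-/

section ProjectiveDimension

variable {R : Type u} [CommRing R]

theorem projective_ker_of_projective_ker {F G M : Type*} [AddCommGroup F] [AddCommGroup G]
    [AddCommGroup M] [Module R F] [Module R G] [Module R M] [Module.Projective R F]
    [Module.Projective R G] (f : F →ₗ[R] M) (g : G →ₗ[R] M) (hf : Function.Surjective f)
    (hg : Function.Surjective g) [Module.Projective R (LinearMap.ker f)] :
    Module.Projective R (LinearMap.ker g) := by
  obtain ⟨u, rfl⟩ := Module.projective_lifting_property g f hg
  obtain ⟨v, hv⟩ := Module.projective_lifting_property (g ∘ₗ u) g hf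
  have hv' (x : G) : g (u (v x)) = g x := LinearMap.congr_fun hv x
  -- As in Schanuel's lemma, `ker g` is a retract of `ker f × G`.
  let i : LinearMap.ker g →ₗ[R] LinearMap.ker (g ∘ₗ u) × G :=
    ((v ∘ₗ (LinearMap.ker g).subtype).codRestrict _ fun x ↦ by
      simp [hv']).prod (LinearMap.ker g).subtype
  let s : LinearMap.ker (g ∘ₗ u) × G →ₗ[R] LinearMap.ker g :=
    (LinearMap.coprod (u ∘ₗ (LinearMap.ker (g ∘ₗ u)).subtype)
      (LinearMap.id - u ∘ₗ v)).codRestrict _ fun ⟨⟨c, hc⟩, x⟩ ↦ by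
        have hc' : g (u c) = 0 := hc
        simp [hv', hc']
  refine Module.Projective.of_split i s (LinearMap.ext fun x ↦ Subtype.ext ?_)
  change u (v x) + (x - u (v x)) = (x : G)
  abel

theorem projective_of_pdLE_quotient {I : Ideal R} {n : ℕ} (hn : n ≤ 1)
    (h : PdLE R n (R ⧸ I)) : Module.Projective R I := by
  obtain ⟨F, _, _, _, f, hf, hker⟩ : ∃ (F : Type u) (_ : AddCommGroup F) (_ : Module R F),
      Module.Projective R F ∧ ∃ f : F →ₗ[R] R ⧸ I, Function.Surjective f ∧
        Module.Projective R (LinearMap.ker f) := by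
    interval_cases n
    · refine ⟨R ⧸ I, _, _, h, LinearMap.id, Function.surjective_id, ?_⟩
      rw [LinearMap.ker_id]
      infer_instance
    · obtain ⟨F, _, _, _, f, hf, hker⟩ := h
      exact ⟨F, _, _, inferInstance, f, hf, hker⟩
  have := projective_ker_of_projective_ker f I.mkQ hf I.mkQ_surjective
  rwa [Submodule.ker_mkQ] at this

theorem pdLE_two_of_exact {ι : Type} [Fintype ι] {G : Type*} [AddCommGroup G] [Module R G]
    [Module.Projective R G] (q : ι → R) (g : G →ₗ[R] ι → R) (hg : Function.Injective g)
    (hgq : Function.Exact g (Fintype.linearCombination R q)) :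
    PdLE R 2 (R ⧸ Ideal.span (Set.range q)) := by
  set I := Ideal.span (Set.range q) with hI
  refine ⟨R, inferInstance, inferInstance, inferInstance, I.mkQ, I.mkQ_surjective, ?_⟩
  rw [Submodule.ker_mkQ]
  have hmem (r : ι → R) : Fintype.linearCombination R q r ∈ I :=
    hI ▸ Ideal.mem_span_range_iff_exists_fun.2 ⟨r, rfl⟩
  refine ⟨ι → R, inferInstance, inferInstance, inferInstance,
    (Fintype.linearCombination R q).codRestrict I hmem, fun ⟨z, hz⟩ ↦ ?_, ?_⟩
  · obtain ⟨r, hr⟩ := Ideal.mem_span_range_iff_exists_fun.1 hz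
    exact ⟨r, Subtype.ext hr⟩
  · rw [LinearMap.ker_codRestrict, hgq.linearMap_ker_eq]
    exact .of_equiv (LinearEquiv.ofInjective g hg)

variable [IsDomain R] [DecompositionMonoid R]

theorem exists_eq_mul_of_mul_eq_mul {a b u v : R} (hab : IsRelPrime a b) (ha : a ≠ 0)
    (h : u * a = v * b) : ∃ t, v = t * a ∧ u = t * b := by
  obtain ⟨t, rfl⟩ : a ∣ v := hab.dvd_of_dvd_mul_right ⟨u, by rw [← h, mul_comm]⟩
  exact ⟨t, mul_comm .., mul_right_cancel₀ ha (by rw [h]; ring)⟩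

theorem exists_linearMap_apply_eq_mul {I : Ideal R} {a b : R} (haI : a ∈ I) (hbI : b ∈ I)
    (hab : IsRelPrime a b) (ha : a ≠ 0) (φ : I →ₗ[R] R) : ∃ c, ∀ x : I, φ x = c * x := by
  have comm (x y : I) : φ x * y = φ y * x := by
    simpa only [map_smul, smul_eq_mul, mul_comm] using
      congrArg φ (Subtype.ext (mul_comm (y : R) x) : (y : R) • x = (x : R) • y)
  obtain ⟨c, hc, -⟩ := exists_eq_mul_of_mul_eq_mul hab ha (comm ⟨b, hbI⟩ ⟨a, haI⟩)
  refine ⟨c, fun x ↦ mul_right_cancel₀ ha ?_⟩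
  rw [comm x ⟨a, haI⟩, hc]
  ring

theorem eq_top_of_projective {I : Ideal R} [hI : Module.Projective R I] {a b : R} (haI : a ∈ I)
    (hbI : b ∈ I) (hab : IsRelPrime a b) (ha : a ≠ 0) : I = ⊤ := by
  obtain ⟨s, hs⟩ := Module.projective_def'.1 hI
  have coord (i : I) : ∃ c, ∀ x : I, s x i = c * x :=
    exists_linearMap_apply_eq_mul haI hbI hab ha (Finsupp.lapply i ∘ₗ s)
  choose c hc using coord
  -- The dual basis expansion of `a` is `a * ∑ c i * i`, so the sum is `1`.
  have expand : ∑ i ∈ (s ⟨a, haI⟩).support, c i * a * (i : R) = a := by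
    simpa [Finsupp.linearCombination_apply, Finsupp.sum, hc] using
      congrArg Subtype.val (LinearMap.congr_fun hs ⟨a, haI⟩)
  have one : ∑ i ∈ (s ⟨a, haI⟩).support, c i * (i : R) = 1 := by
    refine mul_left_cancel₀ ha ?_
    rw [mul_one, Finset.mul_sum]
    exact .trans (Finset.sum_congr rfl fun _ _ ↦ by ring) expand
  exact (Ideal.eq_top_iff_one I).2 (one ▸ I.sum_mem fun i _ ↦ I.mul_mem_left _ i.2)

theorem projDim_quotient_eq_two {I : Ideal R} (hI : I ≠ ⊤) {a b : R} (haI : a ∈ I)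
    (hbI : b ∈ I) (hab : IsRelPrime a b) (ha : a ≠ 0) (h : PdLE R 2 (R ⧸ I)) :
    projDim R (R ⧸ I) = 2 := by
  refine le_antisymm (sInf_le ⟨2, h, rfl⟩) (le_sInf ?_)
  rintro _ ⟨n, hn, rfl⟩
  refine Nat.ofNat_le_cast.2 (not_lt.1 fun hlt ↦ hI ?_)
  have := projective_of_pdLE_quotient (Nat.le_of_lt_succ hlt) hn
  exact eq_top_of_projective haI hbI hab ha

theorem pdLE_two_of_isRelPrime {a b : R} (hab : IsRelPrime a b) (ha : a ≠ 0) :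
    PdLE R 2 (R ⧸ Ideal.span {a, b}) := by
  rw [← Matrix.range_cons_cons_empty a b ![]]
  refine pdLE_two_of_exact ![a, b] (LinearMap.toSpanSingleton R _ ![b, -a]) ?_ fun r ↦ ⟨?_, ?_⟩
  · rw [injective_iff_map_eq_zero]
    intro t ht
    simpa [ha] using congrFun ht 1
  · intro hr
    obtain ⟨t, h₁, h₀⟩ := exists_eq_mul_of_mul_eq_mul (u := r 0) (v := -r 1) hab ha (by
      simp only [Fintype.linearCombination_apply, Fin.sum_univ_two, smul_eq_mul,
        Matrix.cons_val_zero, Matrix.cons_val_one] at hr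
      linear_combination hr)
    refine ⟨t, funext fun i ↦ ?_⟩
    fin_cases i
    · simp [h₀]
    · simp [← h₁]
  · rintro ⟨t, rfl⟩
    simp only [LinearMap.toSpanSingleton_apply, Fintype.linearCombination_apply,
      Fin.sum_univ_two, Pi.smul_apply, smul_eq_mul, Matrix.cons_val_zero, Matrix.cons_val_one]
    ring

theorem exists_of_hilbertBurch_syzygy {a b c d x y q₁ q₂ q₃ s r₀ r₁ r₂ : R}
    (hq : IsRelPrime q₁ q₂) (hq₁ : q₁ ≠ 0) (hq₂ : q₂ ≠ 0) (hx : x ≠ 0)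
    (hxq : x * q₃ = a * q₁ + b * q₂) (hyq : y * q₃ = c * q₁ + d * q₂)
    (h₁ : x * d - y * b = s * q₁) (h₂ : y * a - x * c = s * q₂)
    (hr : r₀ * q₁ + r₁ * q₂ + r₂ * q₃ = 0) :
    ∃ h k, s * r₀ = k * a - h * c ∧ s * r₁ = k * b - h * d ∧ s * r₂ = y * h - x * k := by
  obtain ⟨h, hb, ha⟩ := exists_eq_mul_of_mul_eq_mul (u := x * r₀ + r₂ * a)
    (v := -(x * r₁ + r₂ * b)) hq hq₁ (by linear_combination x * hr - r₂ * hxq)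
  obtain ⟨k, -, hc⟩ := exists_eq_mul_of_mul_eq_mul (u := y * r₀ + r₂ * c)
    (v := -(y * r₁ + r₂ * d)) hq hq₁ (by linear_combination y * hr - r₂ * hyq)
  have hr₂ : s * r₂ = y * h - x * k :=
    mul_right_cancel₀ hq₂ (by linear_combination y * ha - x * hc - r₂ * h₂)
  have hr₀ : s * r₀ = k * a - h * c :=
    mul_left_cancel₀ hx (by linear_combination s * ha - a * hr₂ - h * h₂)
  have hr₁ : s * r₁ = k * b - h * d :=
    mul_left_cancel₀ hx (by linear_combination -s * hb - b * hr₂ + h * h₁)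
  exact ⟨h, k, hr₀, hr₁, hr₂⟩

theorem pdLE_two_of_hilbertBurch {a b c d x y q₁ q₂ q₃ s : R} (hq : IsRelPrime q₁ q₂)
    (hq₁ : q₁ ≠ 0) (hq₂ : q₂ ≠ 0) (hx : x ≠ 0) (hs : IsUnit s)
    (hxq : x * q₃ = a * q₁ + b * q₂) (hyq : y * q₃ = c * q₁ + d * q₂)
    (h₁ : x * d - y * b = s * q₁) (h₂ : y * a - x * c = s * q₂) :
    PdLE R 2 (R ⧸ Ideal.span {q₁, q₂, q₃}) := by
  obtain ⟨t, hst⟩ := hs.exists_right_inv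
  have hsq₂ : s * q₂ ≠ 0 := mul_ne_zero hs.ne_zero hq₂
  have range_eq : Set.range ![q₁, q₂, q₃] = {q₁, q₂, q₃} := by
    rw [Matrix.range_cons, Matrix.range_cons_cons_empty, Set.singleton_union]
  rw [← range_eq]
  refine pdLE_two_of_exact ![q₁, q₂, q₃]
    (Fintype.linearCombination R ![![a, b, -x], ![c, d, -y]]) ?_ fun r ↦ ⟨?_, ?_⟩
  · rw [injective_iff_map_eq_zero]
    intro u hu
    have hu₀ := congrFun hu 0
    have hu₂ := congrFun hu 2
    simp only [Fintype.linearCombination_apply, Fin.sum_univ_two, Pi.add_apply, Pi.smul_apply,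
      smul_eq_mul, Pi.zero_apply, Matrix.cons_val] at hu₀ hu₂
    have h1 : u 1 * (s * q₂) = 0 := by linear_combination (-x) * hu₀ - a * hu₂ - u 1 * h₂
    have h0 : u 0 * (s * q₂) = 0 := by linear_combination y * hu₀ + c * hu₂ - u 0 * h₂
    ext i
    fin_cases i
    exacts [(mul_eq_zero.1 h0).resolve_right hsq₂, (mul_eq_zero.1 h1).resolve_right hsq₂]
  · intro hr
    simp only [Fintype.linearCombination_apply, Fin.sum_univ_three, smul_eq_mul,
      Matrix.cons_val] at hr
    obtain ⟨h, k, r₀, r₁, r₂⟩ := exists_of_hilbertBurch_syzygy hq hq₁ hq₂ hx hxq hyq h₁ h₂ hr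
    refine ⟨![t * k, -t * h], funext fun i ↦ ?_⟩
    fin_cases i <;> simp only [Fintype.linearCombination_apply, Fin.sum_univ_two, Pi.add_apply,
      Pi.smul_apply, smul_eq_mul, Matrix.cons_val, Fin.reduceFinMk]
    · linear_combination r 0 * hst - t * r₀
    · linear_combination r 1 * hst - t * r₁
    · linear_combination r 2 * hst - t * r₂
  · rintro ⟨u, rfl⟩
    simp only [Fintype.linearCombination_apply, Fin.sum_univ_two, Fin.sum_univ_three,
      Pi.add_apply, Pi.smul_apply, smul_eq_mul, Matrix.cons_val]
    linear_combination -u 0 * hxq - u 1 * hyq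

end ProjectiveDimension

section Linkage

variable {R : Type u} [CommRing R] [IsDomain R] [DecompositionMonoid R]
  {a b c d x y q f₁ f₂ : R}

theorem exists_det_eq_mul_of_linked (hf : IsRelPrime f₁ f₂) (hf₁ : f₁ ≠ 0)
    (hxq : x * q = a * f₁ + b * f₂) (hyq : y * q = c * f₁ + d * f₂) :
    ∃ t, x * d - y * b = t * f₁ ∧ y * a - x * c = t * f₂ :=
  exists_eq_mul_of_mul_eq_mul hf hf₁ (by linear_combination x * hyq - y * hxq)

theorem mem_span_pair_of_linked_of_det_eq_zero (hxy : IsRelPrime x y) (hx : x ≠ 0)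
    (hxq : x * q = a * f₁ + b * f₂) (hb : x * d - y * b = 0) (ha : y * a - x * c = 0) :
    q ∈ Ideal.span {f₁, f₂} := by
  obtain ⟨s, ha, -⟩ := exists_eq_mul_of_mul_eq_mul (u := c) (v := a) hxy hx
    (by linear_combination -ha)
  obtain ⟨r, hb, -⟩ := exists_eq_mul_of_mul_eq_mul (u := d) (v := b) hxy hx
    (by linear_combination hb)
  rw [Ideal.mem_span_pair]
  exact ⟨s, r, mul_left_cancel₀ hx (by linear_combination -hxq - f₁ * ha - f₂ * hb)⟩

end Linkage

section RankOne

open scoped TensorProduct nonZeroDivisors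

variable {A N : Type*} [CommRing A] [AddCommGroup N] [Module A N]
  (F : Type*) [Field F] [Algebra A F]

theorem isIntegral_of_lTensor_eq_smul [Module.Finite A N] [Nontrivial (F ⊗[A] N)]
    {φ : Module.End A N} {c : F} (hc : ∀ x, φ.lTensor F x = c • x) : IsIntegral A c := by
  let homothety : F →ₐ[A] Module.End A (F ⊗[A] N) := Algebra.lsmul A A (F ⊗[A] N)
  have hφ : homothety c = Module.End.lTensorAlgHom A N F φ :=
    LinearMap.ext fun x ↦ (hc x).symm
  have hinj : Function.Injective homothety := homothety.toRingHom.injective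
  refine (isIntegral_algHom_iff (B := Module.End A (F ⊗[A] N)) homothety hinj).1 ?_
  rw [hφ]
  exact (Algebra.IsIntegral.isIntegral φ).map _

variable [IsDomain A] [IsFractionRing A F]

theorem injective_tensorProduct_mk_one [Module.IsTorsionFree A N] :
    Function.Injective (TensorProduct.mk A F N 1) := by
  intro x y hxy
  obtain ⟨a, ha⟩ := (IsLocalizedModule.eq_iff_exists A⁰ _).1 hxy
  exact smul_right_injective N (nonZeroDivisors.ne_zero a.2) ha

theorem exists_lTensor_eq_smul_of_finrank_le_one [Module.Finite A N]
    (hN : Module.finrank A N ≤ 1) (φ : Module.End A N) : ∃ c : F, ∀ x, φ.lTensor F x = c • x := by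
  have hrank : Module.finrank F (F ⊗[A] N) ≤ 1 := by
    rwa [(TensorProduct.isBaseChange A N F).finrank_eq]
  rcases Nat.le_one_iff_eq_zero_or_eq_one.1 hrank with h | h
  · have := Module.finrank_zero_iff.1 h
    exact ⟨0, fun x ↦ Subsingleton.elim _ _⟩
  · obtain ⟨c, hc, -⟩ :=
      LinearMap.existsUnique_eq_smul_id_of_finrank_eq_one h (φ.baseChange F)
    exact ⟨c, LinearMap.congr_fun hc⟩

theorem exists_eq_smul_of_finrank_le_one [IsIntegrallyClosed A] [Module.Finite A N]
    [Module.IsTorsionFree A N] (hN : Module.finrank A N ≤ 1) (φ : Module.End A N) :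
    ∃ a : A, ∀ x, φ x = a • x := by
  let F := FractionRing A
  have hmk : Function.Injective (TensorProduct.mk A F N 1) := injective_tensorProduct_mk_one F
  rcases subsingleton_or_nontrivial (F ⊗[A] N) with _ | _
  · have := hmk.subsingleton
    exact ⟨0, fun x ↦ Subsingleton.elim _ _⟩
  obtain ⟨c, hc⟩ := exists_lTensor_eq_smul_of_finrank_le_one F hN φ
  have hc_int : IsIntegral A c := isIntegral_of_lTensor_eq_smul F hc
  obtain ⟨a, rfl⟩ := IsIntegrallyClosed.isIntegral_iff.1 hc_int
  refine ⟨a, fun x ↦ hmk ?_⟩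
  simpa using hc (1 ⊗ₜ x)

end RankOne

section TorsionFree

open scoped Polynomial

theorem C_dvd_of_C_dvd_monic_mul {B : Type*} [CommRing B] {a : B} {D h : B[X]} (hD : D.Monic)
    (hdvd : Polynomial.C a ∣ D * h) : Polynomial.C a ∣ h := by
  have dvd_iff (g : B[X]) :
      Polynomial.C a ∣ g ↔ g.map (Ideal.Quotient.mk (Ideal.span {a})) = 0 := by
    simp [Polynomial.C_dvd_iff_dvd_coeff, Polynomial.ext_iff, Ideal.Quotient.eq_zero_iff_mem,
      Ideal.mem_span_singleton]
  rw [dvd_iff] at hdvd ⊢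
  rw [Polynomial.map_mul] at hdvd
  exact ((hD.map _).mul_right_eq_zero_iff).1 hdvd

-- `D` plays the role of the resultant of `f₁` and `f₂`: once it is eliminated from the relation
-- `C a * g = s * f₁ + t * f₂`, the constant `a` divides the remainder of `t` modulo `f₁`.
theorem mem_span_pair_of_C_mul_mem {B : Type*} [CommRing B] {f₁ f₂ u w : B[X]} {a D : B}
    (hf₁ : f₁.Monic) (hD : Polynomial.C D = u * f₁ + w * f₂) (ha : IsLeftRegular a)
    (haD : ∀ h, a ∣ D * h → a ∣ h) {g : B[X]}
    (hg : Polynomial.C a * g ∈ Ideal.span {f₁, f₂}) : g ∈ Ideal.span {f₁, f₂} := by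
  rw [Ideal.mem_span_pair] at hg ⊢
  obtain ⟨s, t, hst⟩ := hg
  have hDt : Polynomial.C D * t = Polynomial.C a * (w * g) + (t * u - s * w) * f₁ := by
    linear_combination t * hD + w * hst
  have hDt_mod : Polynomial.C D * (t %ₘ f₁) = Polynomial.C a * ((w * g) %ₘ f₁) := by
    have := congrArg (· %ₘ f₁) hDt
    simpa only [Polynomial.add_modByMonic, ← Polynomial.smul_eq_C_mul,
      Polynomial.smul_modByMonic, Polynomial.mul_self_modByMonic hf₁, add_zero] using this
  obtain ⟨t', ht'⟩ : Polynomial.C a ∣ t %ₘ f₁ := by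
    refine (Polynomial.C_dvd_iff_dvd_coeff _ _).2 fun i ↦ haD _ ?_
    rw [← Polynomial.coeff_C_mul, hDt_mod, Polynomial.coeff_C_mul]
    exact dvd_mul_right _ _
  have hdiv := Polynomial.modByMonic_add_div t f₁
  have hg' : Polynomial.C a * (g - t' * f₂) = f₁ * (s + (t /ₘ f₁) * f₂) := by
    linear_combination -hst - f₂ * hdiv + f₂ * ht'
  obtain ⟨s', hs'⟩ := C_dvd_of_C_dvd_monic_mul hf₁ ⟨_, hg'.symm⟩
  have hCa : IsLeftRegular (Polynomial.C a) := fun p q hpq ↦ Polynomial.ext fun n ↦ ha <| by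
    simpa using congrArg (Polynomial.coeff · n) hpq
  refine ⟨s', t', hCa ?_⟩
  dsimp only
  linear_combination -hg' - f₁ * hs'

theorem monic_C_mul_resultant {A : Type*} [CommRing A] {b a₁ a₂ a₃ β c₁ c₂ c₃ κ : A}
    (hκ : κ * (1 - b * β) = 1) {P Q S U : A[X]}
    (hP : P = Polynomial.C b * Polynomial.X + Polynomial.C a₁)
    (hQ : Q = Polynomial.C a₂ * Polynomial.X + Polynomial.C a₃)
    (hS : S = Polynomial.C β * Polynomial.X + Polynomial.C c₁)
    (hU : U = Polynomial.X ^ 2 + Polynomial.C c₂ * Polynomial.X + Polynomial.C c₃) :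
    (Polynomial.C κ * (U ^ 2 - P * S * U + S ^ 2 * Q)).Monic := by
  subst hP hQ hS hU
  refine Polynomial.monic_of_natDegree_le_of_coeff_eq_one 4 (by compute_degree) ?_
  compute_degree
  · linear_combination hκ
  all_goals decide

theorem mem_span_quadric_pair_of_C_C_mul_mem {A : Type*} [CommRing A] [IsDomain A]
    {b a₁ a₂ a₃ β c₁ c₂ c₃ : A} (hbβ : IsUnit (1 - b * β)) {x y f₁ f₂ : A[X][X]}
    (hx : x = Polynomial.X) (hy : y = Polynomial.C Polynomial.X)
    (hf₁ : f₁ = x ^ 2 + Polynomial.C (Polynomial.C b) * (x * y) +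
      Polynomial.C (Polynomial.C a₁) * x + Polynomial.C (Polynomial.C a₂) * y +
      Polynomial.C (Polynomial.C a₃))
    (hf₂ : f₂ = y ^ 2 + Polynomial.C (Polynomial.C β) * (x * y) +
      Polynomial.C (Polynomial.C c₁) * x + Polynomial.C (Polynomial.C c₂) * y +
      Polynomial.C (Polynomial.C c₃))
    {a : A} (ha : a ≠ 0) {g : A[X][X]}
    (hg : Polynomial.C (Polynomial.C a) * g ∈ Ideal.span {f₁, f₂}) :
    g ∈ Ideal.span {f₁, f₂} := by
  obtain ⟨κ, hκ⟩ := hbβ.exists_left_inv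
  obtain ⟨P, hP⟩ : ∃ P, P = Polynomial.C b * Polynomial.X + Polynomial.C a₁ := ⟨_, rfl⟩
  obtain ⟨Q, hQ⟩ : ∃ Q, Q = Polynomial.C a₂ * Polynomial.X + Polynomial.C a₃ := ⟨_, rfl⟩
  obtain ⟨S, hS⟩ : ∃ S, S = Polynomial.C β * Polynomial.X + Polynomial.C c₁ := ⟨_, rfl⟩
  obtain ⟨U, hU⟩ : ∃ U, U = Polynomial.X ^ 2 + Polynomial.C c₂ * Polynomial.X +
    Polynomial.C c₃ := ⟨_, rfl⟩
  have hf₁' : f₁ = Polynomial.X ^ 2 + Polynomial.C P * Polynomial.X + Polynomial.C Q := by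
    rw [hf₁, hx, hy, hP, hQ]
    simp only [Polynomial.C_add, Polynomial.C_mul]
    ring
  have hf₂' : f₂ = Polynomial.C S * Polynomial.X + Polynomial.C U := by
    rw [hf₂, hx, hy, hS, hU]
    simp only [Polynomial.C_add, Polynomial.C_mul, Polynomial.C_pow]
    ring
  have hD := monic_C_mul_resultant hκ hP hQ hS hU
  have hmonic : f₁.Monic := by
    rw [hf₁']
    monicity!
  refine mem_span_pair_of_C_mul_mem hmonic
    (u := Polynomial.C (Polynomial.C κ) * Polynomial.C S ^ 2)
    (w := Polynomial.C (Polynomial.C κ) *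
      (Polynomial.C U - Polynomial.C S * Polynomial.X - Polynomial.C P * Polynomial.C S)) ?_
    (IsLeftCancelMulZero.mul_left_cancel_of_ne_zero (Polynomial.C_ne_zero.2 ha))
    (fun h ↦ C_dvd_of_C_dvd_monic_mul hD) hg
  rw [hf₁', hf₂']
  simp only [Polynomial.C_add, Polynomial.C_sub, Polynomial.C_mul, Polynomial.C_pow]
  ring

end TorsionFree

section Homogeneous

variable {σ τ R : Type*} [CommRing R]

theorem homogeneousComponent_apply_of_isHomogeneous {n : ℕ}
    (φ : MvPolynomial τ R →ₗ[R] MvPolynomial σ R)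
    (hφ : ∀ m a, a.IsHomogeneous m → (φ a).IsHomogeneous (m + n)) (m : ℕ) (a : MvPolynomial τ R) :
    homogeneousComponent (m + n) (φ a) = φ (homogeneousComponent m a) := by
  have hcomp (i : ℕ) : homogeneousComponent (m + n) (φ (homogeneousComponent i a)) =
      if i = m then φ (homogeneousComponent m a) else 0 := by
    rw [homogeneousComponent_of_mem (hφ i _ (homogeneousComponent_isHomogeneous i a))]
    by_cases h : i = m
    · simp [h]
    · rw [if_neg h, if_neg (by omega)]
  conv_lhs => rw [← sum_homogeneousComponent a, map_sum, map_sum]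
  simp_rw [hcomp, Finset.sum_ite_eq', Finset.mem_range]
  split_ifs with h
  · rfl
  · rw [homogeneousComponent_eq_zero _ _ (by omega), map_zero]

theorem homogeneousComponent_mul_of_isHomogeneous {n : ℕ} {q : MvPolynomial σ R}
    (hq : q.IsHomogeneous n) (m : ℕ) (g : MvPolynomial σ R) :
    homogeneousComponent (m + n) (g * q) = homogeneousComponent m g * q :=
  homogeneousComponent_apply_of_isHomogeneous (LinearMap.mulRight R q)
    (fun _ _ ha ↦ ha.mul hq) m g

theorem exists_isHomogeneous_homogeneousComponent_mul_eq {n : ℕ} {f₁ f₂ g q : MvPolynomial σ R}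
    (hf₁ : f₁.IsHomogeneous n) (hf₂ : f₂.IsHomogeneous n) (hq : q.IsHomogeneous n)
    (h : g * q ∈ Ideal.span {f₁, f₂}) (m : ℕ) :
    ∃ a b : MvPolynomial σ R, a.IsHomogeneous m ∧ b.IsHomogeneous m ∧
      homogeneousComponent m g * q = a * f₁ + b * f₂ := by
  obtain ⟨a, b, hab⟩ := Ideal.mem_span_pair.1 h
  refine ⟨homogeneousComponent m a, homogeneousComponent m b,
    homogeneousComponent_isHomogeneous _ _, homogeneousComponent_isHomogeneous _ _, ?_⟩
  rw [← homogeneousComponent_mul_of_isHomogeneous hq,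
    ← homogeneousComponent_mul_of_isHomogeneous hf₁,
    ← homogeneousComponent_mul_of_isHomogeneous hf₂, ← hab, map_add]

theorem exists_eq_C_of_isHomogeneous_mul [IsDomain R] {n : ℕ} {t g : MvPolynomial σ R}
    (hg : g.IsHomogeneous n) (hg₀ : g ≠ 0) (h : (t * g).IsHomogeneous n) : ∃ c : R, t = C c := by
  obtain rfl | ht := eq_or_ne t 0
  · exact ⟨0, C_0.symm⟩
  have hdeg := totalDegree_mul_of_isDomain ht hg₀
  rw [h.totalDegree (mul_ne_zero ht hg₀), hg.totalDegree hg₀, right_eq_add] at hdeg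
  exact ⟨_, totalDegree_eq_zero_iff_eq_C.1 hdeg⟩

end Homogeneous

section Linked

variable {σ K : Type*} [Field K]

theorem isRelPrime_of_eval_eq {x y : MvPolynomial σ K} (hx : x.IsHomogeneous 1)
    (hy : y.IsHomogeneous 1) {v w : σ → K} (hxv : eval v x ≠ 0) (hxw : eval w x = 0)
    (hyw : eval w y ≠ 0) : IsRelPrime x y := by
  rintro d ⟨g, rfl⟩ ⟨h, rfl⟩
  have hdg : d * g ≠ 0 := fun h₀ ↦ hxv (by rw [h₀, map_zero])
  have hdh : d * h ≠ 0 := fun h₀ ↦ hyw (by rw [h₀, map_zero])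
  have hg := totalDegree_mul_of_isDomain (left_ne_zero_of_mul hdg) (right_ne_zero_of_mul hdg)
  rw [hx.totalDegree hdg] at hg
  obtain hd | hg₀ : d.totalDegree = 0 ∨ g.totalDegree = 0 := by omega
  · rw [totalDegree_eq_zero_iff_eq_C.1 hd] at hdg ⊢
    exact (IsUnit.mk0 _ fun h₀ ↦ hdg (by rw [h₀, C_0, zero_mul])).map C
  · -- If `g` is constant then `d` is linear and `h` is constant, so `x` and `y` are proportional.
    have hh := totalDegree_mul_of_isDomain (left_ne_zero_of_mul hdh) (right_ne_zero_of_mul hdh)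
    rw [hy.totalDegree hdh] at hh
    rw [totalDegree_eq_zero_iff_eq_C.1 hg₀] at hxv hxw
    simp only [map_mul, eval_C, ne_eq, mul_eq_zero, not_or] at hxv hxw hyw
    exact absurd (hxw.resolve_right hxv.2) hyw.1

variable {m : ℕ} {f₁ f₂ x y : MvPolynomial σ K}

theorem exists_det_eq_C_mul_of_linked (hf₁ : f₁.IsHomogeneous (2 * m))
    (hf₂ : f₂.IsHomogeneous (2 * m)) (hf₁₀ : f₁ ≠ 0) (hf : IsRelPrime f₁ f₂)
    (hx : x.IsHomogeneous m) (hy : y.IsHomogeneous m) {q : MvPolynomial σ K}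
    (hq : q.IsHomogeneous (2 * m)) (hxq : x * q ∈ Ideal.span {f₁, f₂})
    (hyq : y * q ∈ Ideal.span {f₁, f₂}) :
    ∃ (a b c d : MvPolynomial σ K) (s : K), x * q = a * f₁ + b * f₂ ∧ y * q = c * f₁ + d * f₂ ∧
      x * d - y * b = C s * f₁ ∧ y * a - x * c = C s * f₂ := by
  obtain ⟨a, b, -, hb, hab⟩ := exists_isHomogeneous_homogeneousComponent_mul_eq hf₁ hf₂ hq hxq m
  obtain ⟨c, d, -, hd, hcd⟩ := exists_isHomogeneous_homogeneousComponent_mul_eq hf₁ hf₂ hq hyq m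
  rw [homogeneousComponent_eq_self hx] at hab
  rw [homogeneousComponent_eq_self hy] at hcd
  obtain ⟨t, ht₁, ht₂⟩ := exists_det_eq_mul_of_linked hf hf₁₀ hab hcd
  have hdet : (x * d - y * b).IsHomogeneous (2 * m) := by
    rw [two_mul]
    exact (hx.mul hd).sub (hy.mul hb)
  obtain ⟨s, rfl⟩ := exists_eq_C_of_isHomogeneous_mul hf₁ hf₁₀ (ht₁ ▸ hdet)
  exact ⟨a, b, c, d, s, hab, hcd, ht₁, ht₂⟩

theorem pdLE_two_of_linked (hf₁ : f₁.IsHomogeneous (2 * m)) (hf₂ : f₂.IsHomogeneous (2 * m))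
    (hf₁₀ : f₁ ≠ 0) (hf₂₀ : f₂ ≠ 0) (hf : IsRelPrime f₁ f₂) (hx : x.IsHomogeneous m)
    (hy : y.IsHomogeneous m) (hx₀ : x ≠ 0) (hxy : IsRelPrime x y) {S : Set (MvPolynomial σ K)}
    (hS : ∀ q ∈ S, q.IsHomogeneous (2 * m)) (hf₁S : f₁ ∈ Ideal.span S) (hf₂S : f₂ ∈ Ideal.span S)
    (hxS : ∀ q ∈ S, x * q ∈ Ideal.span {f₁, f₂}) (hyS : ∀ q ∈ S, y * q ∈ Ideal.span {f₁, f₂}) :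
    PdLE (MvPolynomial σ K) 2 (MvPolynomial σ K ⧸ Ideal.span S) := by
  have hfS : Ideal.span {f₁, f₂} ≤ Ideal.span S := Ideal.span_le.2 (Set.pair_subset hf₁S hf₂S)
  by_cases hSf : S ⊆ Ideal.span {f₁, f₂}
  · rw [le_antisymm (Ideal.span_le.2 hSf) hfS]
    exact pdLE_two_of_isRelPrime hf hf₁₀
  obtain ⟨q, hqS, hq⟩ := Set.not_subset.1 hSf
  have hlink (r) (hr : r ∈ S) := exists_det_eq_C_mul_of_linked hf₁ hf₂ hf₁₀ hf hx hy (hS r hr)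
    (hxS r hr) (hyS r hr)
  obtain ⟨a, b, c, d, s, hab, hcd, hs₁, hs₂⟩ := hlink q hqS
  have hs : s ≠ 0 := by
    rintro rfl
    rw [C_0, zero_mul] at hs₁ hs₂
    exact hq (mem_span_pair_of_linked_of_det_eq_zero hxy hx₀ hab hs₁ hs₂)
  suffices hspan : Ideal.span S = Ideal.span {f₁, f₂, q} by
    rw [hspan]
    exact pdLE_two_of_hilbertBurch hf hf₁₀ hf₂₀ hx₀ ((IsUnit.mk0 s hs).map C) hab hcd hs₁ hs₂
  have hqmem : q ∈ Ideal.span {f₁, f₂, q} := Ideal.subset_span (by simp)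
  refine le_antisymm (Ideal.span_le.2 fun r hr ↦ ?_) (Ideal.span_le.2 ?_)
  · obtain ⟨a', b', c', d', s', hab', -, hs₁', hs₂'⟩ := hlink r hr
    -- The combination of `q` and `r` for which the linkage determinant vanishes.
    have hmem : C s' * q - C s * r ∈ Ideal.span {f₁, f₂} :=
      mem_span_pair_of_linked_of_det_eq_zero (a := C s' * a - C s * a')
        (b := C s' * b - C s * b') (c := C s' * c - C s * c') (d := C s' * d - C s * d') hxy hx₀
        (by linear_combination C s' * hab - C s * hab')
        (by linear_combination C s' * hs₁ - C s * hs₁')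
        (by linear_combination C s' * hs₂ - C s * hs₂')
    have hsr : C s * r ∈ Ideal.span {f₁, f₂, q} := by
      rw [← sub_sub_cancel (C s' * q) (C s * r)]
      exact sub_mem (Ideal.mul_mem_left _ _ hqmem)
        (Ideal.span_mono (Set.insert_subset_insert (by simp)) hmem)
    exact (Ideal.unit_mul_mem_iff_mem _ ((IsUnit.mk0 s hs).map C)).1 hsr
  · rintro r (rfl | rfl | rfl)
    exacts [hf₁S, hf₂S, Ideal.subset_span hqS]

end Linked

section Height

variable {R : Type*} [CommRing R]

theorem idealHeight_eq_height (I : Ideal R) : idealHeight I = I.height := by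
  refine le_antisymm ?_ (le_iInf₂ fun p hp ↦ ?_)
  · rw [I.height_eq_inf_minimalPrimes]
    refine le_iInf₂ fun p hp ↦ (iInf₂_le ⟨p, hp.isPrime⟩ hp.1.2).trans_eq ?_
    rw [← PrimeSpectrum.height_eq_orderHeight]
  · rw [← PrimeSpectrum.height_eq_orderHeight]
    exact Ideal.height_mono hp

variable [IsDomain R] [UniqueFactorizationMonoid R]

theorem two_le_height_of_isRelPrime {I : Ideal R} {a b : R} (haI : a ∈ I) (hbI : b ∈ I)
    (hab : IsRelPrime a b) (ha : a ≠ 0) : 2 ≤ I.height := by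
  rw [I.height_eq_inf_minimalPrimes]
  refine le_iInf₂ fun p hp ↦ ?_
  have := hp.isPrime
  have h₀ : p.height ≠ 0 := by
    rw [ne_eq, Ideal.height_eq_zero_iff_eq_bot]
    rintro rfl
    exact ha (hp.1.2 haI)
  -- In a factorial ring a height one prime is principal, and its generator would divide `a`, `b`.
  have h₁ : p.height ≠ 1 := fun h ↦ by
    obtain ⟨π, rfl⟩ := UniqueFactorizationMonoid.isPrincipal_of_height_eq_one h
    exact this.ne_top (Ideal.span_singleton_eq_top.2
      (hab (Ideal.mem_span_singleton.1 (hp.1.2 haI)) (Ideal.mem_span_singleton.1 (hp.1.2 hbI))))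
  rw [← one_add_one_eq_two, ENat.add_one_le_iff ENat.one_ne_top]
  exact lt_of_le_of_ne (Order.one_le_iff_ne_zero.2 h₀) h₁.symm

theorem mem_minimalPrimes_of_isRelPrime {p : Ideal R} [p.IsPrime] (hp : p.height = 2) {a b : R}
    (hap : a ∈ p) (hbp : b ∈ p) (hab : IsRelPrime a b) (ha : a ≠ 0) :
    p ∈ (Ideal.span {a, b}).minimalPrimes := by
  have : p.FiniteHeight := ⟨.inr (hp ▸ by decide)⟩
  exact Ideal.mem_minimalPrimes_of_height_le (Ideal.span_le.2 (Set.pair_subset hap hbp)) <|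
    hp.trans_le <| two_le_height_of_isRelPrime (Ideal.subset_span (by simp))
      (Ideal.subset_span (by simp)) hab ha

theorem exists_isRelPrime_of_one_lt_height {K : Type*} [Field K] [Infinite K] [Algebra K R]
    [IsNoetherianRing R] {V : Submodule K R} (hV : 1 < (Ideal.span (V : Set R)).height) {a : R}
    (ha : a ≠ 0) : ∃ b ∈ V, IsRelPrime a b := by
  classical
  let W (π : R) : Subspace K V := ((Ideal.span {π}).restrictScalars K).comap V.subtype
  have hW {π : R} (hπ : Prime π) : W π ≠ ⊤ := fun htop ↦ by
    have hle : Ideal.span (V : Set R) ≤ Ideal.span {π} :=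
      Ideal.span_le.2 fun v hv ↦ (htop ▸ Submodule.mem_top : (⟨v, hv⟩ : V) ∈ W π)
    exact (hV.trans_le (Ideal.height_mono hle)).not_ge
      (Ideal.height_span_singleton_le_one hπ.not_isUnit)
  let s := (UniqueFactorizationMonoid.factors a).toFinset
  have hs : ⋃ π : s, (W π : Set V) ≠ Set.univ := fun h ↦ by
    obtain ⟨π, hπ⟩ := Subspace.exists_eq_top_of_iUnion_eq_univ h
    exact hW (UniqueFactorizationMonoid.prime_of_factor _ (Multiset.mem_toFinset.1 π.2)) hπ
  obtain ⟨b, hb⟩ := (Set.ne_univ_iff_exists_notMem _).1 hs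
  refine ⟨b, b.2, (UniqueFactorizationMonoid.isRelPrime_iff_no_prime_factors ha).2
    fun d hda hdb hd ↦ hb ?_⟩
  obtain ⟨π, hπ, hdπ⟩ := UniqueFactorizationMonoid.exists_mem_factors_of_dvd ha hd.irreducible hda
  exact Set.mem_iUnion.2 ⟨⟨π, Multiset.mem_toFinset.2 hπ⟩,
    Ideal.mem_span_singleton.2 (hdπ.symm.dvd.trans hdb)⟩

end Height

section NormalForm

variable {σ K : Type*} [Field K]

theorem eval_zero_of_isHomogeneous {n : ℕ} (hn : n ≠ 0) {f : MvPolynomial σ K}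
    (hf : f.IsHomogeneous n) : eval 0 f = 0 := by
  rw [eval_zero, constantCoeff_eq]
  exact hf.coeff_eq_zero (by simpa using hn.symm)

theorem eval_smul_add_of_isHomogeneous_one {l : MvPolynomial σ K} (hl : l.IsHomogeneous 1)
    (s : K) (v w : σ → K) : eval (s • v + w) l = s * eval v l + eval w l := by
  rw [← mem_homogeneousSubmodule, homogeneousSubmodule_one_eq_span_X] at hl
  induction hl using Submodule.span_induction with
  | mem x h => obtain ⟨i, rfl⟩ := h; simp
  | zero => simp
  | add x y _ _ hx hy => simp only [map_add, hx, hy]; ring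
  | smul a x _ hx => simp only [smul_eval, hx]; ring

theorem exists_polar_of_isHomogeneous_two {f : MvPolynomial σ K} (hf : f.IsHomogeneous 2)
    (v : σ → K) : ∃ b : MvPolynomial σ K, b.IsHomogeneous 1 ∧ ∀ (s : K) (w : σ → K),
      eval (s • v + w) f = s ^ 2 * eval v f + s * eval w b + eval w f := by
  rw [← mem_homogeneousSubmodule, ← homogeneousSubmodule_one_pow, pow_two] at hf
  induction hf using Submodule.mul_induction_on' with
  | mem_mul_mem l hl m hm =>
    refine ⟨C (eval v l) * m + C (eval v m) * l, (hm.C_mul _).add (hl.C_mul _), fun s w ↦ ?_⟩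
    simp only [map_mul, map_add, eval_C, eval_smul_add_of_isHomogeneous_one hl,
      eval_smul_add_of_isHomogeneous_one hm]
    ring
  | add x _ y _ hx hy =>
    obtain ⟨b, hb, hxb⟩ := hx
    obtain ⟨c, hc, hyc⟩ := hy
    refine ⟨b + c, hb.add hc, fun s w ↦ ?_⟩
    simp only [map_add, hxb, hyc]
    ring

/-- The normal form of a pair of quadrics used to make the polynomial ring modulo `f₁, f₂` finite
over the polynomials in all but two variables: in the coordinates `X, Y` of the plane spanned by
`v` and `w`, the quadrics restrict to `X ^ 2 + b * X * Y` and `Y ^ 2 + β * X * Y` with `b * β ≠ 1`.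
Here `b` and `β` are the factors of the last condition. -/
structure IsNormalPair (f₁ f₂ : MvPolynomial σ K) (v w : σ → K) : Prop where
  isHomogeneous_left : f₁.IsHomogeneous 2
  isHomogeneous_right : f₂.IsHomogeneous 2
  eval_left_left : eval v f₁ = 1
  eval_right_left : eval w f₁ = 0
  eval_left_right : eval v f₂ = 0
  eval_right_right : eval w f₂ = 1
  mul_ne_one : (eval (v + w) f₁ - 1) * (eval (v + w) f₂ - 1) ≠ 1

theorem eval_smul_of_isHomogeneous_two {f : MvPolynomial σ K} (hf : f.IsHomogeneous 2) (s : K)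
    (v : σ → K) : eval (s • v) f = s ^ 2 * eval v f := by
  obtain ⟨b, hb, h⟩ := exists_polar_of_isHomogeneous_two hf v
  have := h s 0
  rwa [eval_zero_of_isHomogeneous one_ne_zero hb, eval_zero_of_isHomogeneous two_ne_zero hf,
    mul_zero, add_zero, add_zero, add_zero] at this

theorem IsNormalPair.left_ne_zero {f₁ f₂ : MvPolynomial σ K} {v w : σ → K}
    (h : IsNormalPair f₁ f₂ v w) : f₁ ≠ 0 :=
  ne_of_apply_ne (eval v) (by simp [h.eval_left_left])

theorem IsNormalPair.right_ne_zero {f₁ f₂ : MvPolynomial σ K} {v w : σ → K}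
    (h : IsNormalPair f₁ f₂ v w) : f₂ ≠ 0 :=
  ne_of_apply_ne (eval w) (by simp [h.eval_right_right])

theorem IsNormalPair.linearIndependent {f₁ f₂ : MvPolynomial σ K} {v w : σ → K}
    (h : IsNormalPair f₁ f₂ v w) : LinearIndependent K ![v, w] := by
  refine LinearIndependent.pair_iff.2 fun s t hst ↦ ?_
  have hsv : s • v = (-t) • w := by
    rw [neg_smul]
    exact eq_neg_of_add_eq_zero_left hst
  have h₁ := congrArg (eval · f₁) hsv
  have h₂ := congrArg (eval · f₂) hsv
  simp only [eval_smul_of_isHomogeneous_two h.isHomogeneous_left, h.eval_left_left,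
    h.eval_right_left] at h₁
  simp only [eval_smul_of_isHomogeneous_two h.isHomogeneous_right, h.eval_left_right,
    h.eval_right_right] at h₂
  exact ⟨by simpa using h₁, by simpa using h₂.symm⟩

variable [Infinite K]

theorem exists_eval_ne_zero {f : MvPolynomial σ K} (hf : f ≠ 0) : ∃ v, eval v f ≠ 0 := by
  contrapose! hf
  exact MvPolynomial.funext fun v ↦ by rw [hf v, map_zero]

theorem exists_isRelPrime_eval_eq {V : Submodule K (MvPolynomial σ K)} {q₁ q₂ : MvPolynomial σ K}
    (hq₁V : q₁ ∈ V) (hq₂V : q₂ ∈ V) (hq₁ : q₁ ≠ 0) (hq : IsRelPrime q₁ q₂) :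
    ∃ (f₁ f₂ : MvPolynomial σ K) (v : σ → K), f₁ ∈ V ∧ f₂ ∈ V ∧ IsRelPrime f₁ f₂ ∧
      eval v f₁ = 1 ∧ eval v f₂ = 0 := by
  obtain ⟨v, hv⟩ := exists_eval_ne_zero hq₁
  refine ⟨C (eval v q₁)⁻¹ * q₁, q₂ + C (-(eval v q₂ / eval v q₁)) * q₁, v, ?_, ?_, ?_, ?_, ?_⟩
  · rw [C_mul']
    exact V.smul_mem _ hq₁V
  · rw [C_mul']
    exact V.add_mem hq₂V (V.smul_mem _ hq₁V)
  · exact (isRelPrime_mul_unit_left_left ((IsUnit.mk0 _ (inv_ne_zero hv)).map C)).2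
      (IsRelPrime.add_mul_right_right_iff.2 hq)
  · simp [hv]
  · simp only [map_add, map_mul, eval_C]
    field_simp
    ring

variable {f₁ f₂ : MvPolynomial σ K}

theorem eq_zero_of_sq_eq_C_mul {b : MvPolynomial σ K} (hb : b.IsHomogeneous 1) {v : σ → K}
    (hbv : eval v b = 0) (hf : ∀ w, eval (v + w) f₂ = eval w b + eval w f₂) {c : K}
    (h : b ^ 2 = C c * f₂) : b = 0 := by
  by_contra hb₀
  obtain ⟨w, hw⟩ := exists_eval_ne_zero hb₀
  have hbvw : eval (v + w) b = eval w b := by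
    simpa [hbv] using eval_smul_add_of_isHomogeneous_one hb 1 v w
  have hvw := congrArg (eval (v + w)) h
  have hw' := congrArg (eval w) h
  simp only [map_pow, map_mul, eval_C, hbvw, hf] at hvw hw'
  have hc : c = 0 := by
    refine (mul_eq_zero.1 ?_).resolve_right hw
    linear_combination hw' - hvw
  rw [hc, zero_mul] at hw'
  exact hw (pow_eq_zero_iff two_ne_zero |>.1 hw')

-- The polynomial below is the resultant in `s` of `f₁ (s v + w)` and `f₂ (s v + w)` when
-- `f₁ v = 1` and `f₂ v = 0`.
theorem resultant_ne_zero (hf₁ : f₁.IsHomogeneous 2) (hf₂ : f₂.IsHomogeneous 2)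
    (hf : IsRelPrime f₁ f₂) {v : σ → K} (hf₂v : eval v f₂ = 0) (b₁ : MvPolynomial σ K)
    {b₂ : MvPolynomial σ K} (hb₂ : b₂.IsHomogeneous 1)
    (hfb : ∀ (s : K) (w : σ → K), eval (s • v + w) f₂ = s * eval w b₂ + eval w f₂) :
    f₂ ≠ 0 ∧ f₂ ^ 2 - b₁ * b₂ * f₂ + f₁ * b₂ ^ 2 ≠ 0 := by
  have hf₂₀ : f₂ ≠ 0 := by
    rintro rfl
    refine ((isRelPrime_zero_right.1 hf).map (eval (0 : σ → K))).ne_zero ?_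
    exact eval_zero_of_isHomogeneous two_ne_zero hf₁
  refine ⟨hf₂₀, fun h ↦ ?_⟩
  have hdvd : f₂ ∣ f₁ * b₂ ^ 2 := ⟨b₁ * b₂ - f₂, by linear_combination h⟩
  obtain ⟨t, ht⟩ := hf.symm.dvd_of_dvd_mul_left hdvd
  rw [mul_comm] at ht
  obtain ⟨c, rfl⟩ := exists_eq_C_of_isHomogeneous_mul hf₂ hf₂₀ (ht ▸ hb₂.pow 2)
  have hb₂v : eval v b₂ = 0 := by
    have := hfb (-1) v
    rw [neg_one_smul, neg_add_cancel, eval_zero_of_isHomogeneous two_ne_zero hf₂, hf₂v] at this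
    linear_combination this
  have hb₂₀ := eq_zero_of_sq_eq_C_mul hb₂ hb₂v (fun w ↦ by simpa using hfb 1 w) ht
  rw [hb₂₀] at h
  simp [hf₂₀] at h

theorem exists_isNormalPair {V : Submodule K (MvPolynomial σ K)}
    (hV : ∀ q ∈ V, q.IsHomogeneous 2) {q₁ q₂ : MvPolynomial σ K} (hq₁V : q₁ ∈ V) (hq₂V : q₂ ∈ V)
    (hq₁ : q₁ ≠ 0) (hq : IsRelPrime q₁ q₂) :
    ∃ (f₁ f₂ : MvPolynomial σ K) (v w : σ → K), f₁ ∈ V ∧ f₂ ∈ V ∧ IsRelPrime f₁ f₂ ∧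
      IsNormalPair f₁ f₂ v w := by
  obtain ⟨f₁, f₂, v, hf₁V, hf₂V, hf, hf₁v, hf₂v⟩ := exists_isRelPrime_eval_eq hq₁V hq₂V hq₁ hq
  obtain ⟨b₁, -, hfb₁⟩ := exists_polar_of_isHomogeneous_two (hV _ hf₁V) v
  obtain ⟨b₂, hb₂, hfb₂⟩ := exists_polar_of_isHomogeneous_two (hV _ hf₂V) v
  simp only [hf₁v, hf₂v, mul_one, mul_zero, zero_add] at hfb₁ hfb₂
  obtain ⟨hf₂₀, hres⟩ := resultant_ne_zero (hV _ hf₁V) (hV _ hf₂V) hf hf₂v b₁ hb₂ hfb₂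
  obtain ⟨w, hw⟩ := exists_eval_ne_zero (mul_ne_zero hres hf₂₀)
  obtain ⟨hwres, hf₂w⟩ := mul_ne_zero_iff.1 (map_mul (eval w) _ f₂ ▸ hw)
  simp only [map_add, map_sub, map_mul, map_pow] at hwres
  have h₁ := hfb₁ 1 w
  have h₂ := hfb₂ 1 w
  rw [one_smul] at h₁ h₂
  have hf₁'V : f₁ + C (-(eval w f₁ / eval w f₂)) * f₂ ∈ V := by
    rw [C_mul']
    exact V.add_mem hf₁V (V.smul_mem _ hf₂V)
  have hf₂'V : C (eval w f₂)⁻¹ * f₂ ∈ V := by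
    rw [C_mul']
    exact V.smul_mem _ hf₂V
  refine ⟨_, _, v, w, hf₁'V, hf₂'V, ?_, hV _ hf₁'V, hV _ hf₂'V, ?_, ?_, ?_, ?_, fun h ↦ hwres ?_⟩
  · exact (isRelPrime_mul_unit_left_right ((IsUnit.mk0 _ (inv_ne_zero hf₂w)).map C)).2
      (IsRelPrime.add_mul_right_left_iff.2 hf)
  · simp [hf₁v, hf₂v]
  · simp only [map_add, map_mul, eval_C]
    field_simp
    ring
  · simp [hf₂v]
  · simp [hf₂w]
  · simp only [map_add, map_mul, eval_C, h₁, h₂] at h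
    field_simp at h
    linear_combination -h

end NormalForm

section Coordinates

section Basis

variable {K V : Type*} [Field K] [AddCommGroup V] [Module K V]

theorem exists_basis_none_eq_and_some_none_eq [Module.Finite K V] {v w : V}
    (h : LinearIndependent K ![v, w]) :
    ∃ (d : ℕ) (ε : Module.Basis (Option (Option (Fin d))) K V), ε none = v ∧ ε (some none) = w := by
  let b := Module.Basis.sumExtend h
  have hb : ∀ i, b (Sum.inl i) = ![v, w] i := fun i ↦ by
    simp only [b, Module.Basis.sumExtend, Module.Basis.reindex_apply,
      Module.Basis.extend_apply_self]
    rfl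
  have : Finite (Fin 2 ⊕ Module.Basis.sumExtendIndex h) := Module.Finite.finite_basis b
  have : Finite (Module.Basis.sumExtendIndex h) := Finite.sum_right (Fin 2)
  obtain ⟨d, ⟨e⟩⟩ := Finite.exists_equiv_fin (Module.Basis.sumExtendIndex h)
  let E : Fin 2 ⊕ Module.Basis.sumExtendIndex h ≃ Option (Option (Fin d)) :=
    { toFun := Sum.elim ![none, some none] fun i ↦ some (some (e i))
      invFun := fun o ↦ o.elim (Sum.inl 0) fun o ↦ o.elim (Sum.inl 1) fun i ↦ Sum.inr (e.symm i)
      left_inv := by rintro (i | i) <;> [fin_cases i <;> rfl; simp]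
      right_inv := by rintro (_ | _ | i) <;> simp }
  refine ⟨d, b.reindex E, ?_, ?_⟩ <;> rw [Module.Basis.reindex_apply]
  exacts [hb 0, hb 1]

end Basis

variable {K σ κ τ : Type*} [Field K] [Fintype σ] [Fintype κ] [Fintype τ]

open Classical in
/-- The linear form on `σ → K`, as a polynomial, whose value at a point is its `k`-th coordinate in
the basis `ε`. -/
noncomputable def coordForm (ε : Module.Basis κ K (σ → K)) (k : κ) : MvPolynomial σ K :=
  LinearMap.toMvPolynomial (Pi.basisFun K σ) ε LinearMap.id k

theorem isHomogeneous_coordForm (ε : Module.Basis κ K (σ → K)) (k : κ) :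
    (coordForm ε k).IsHomogeneous 1 := by
  classical exact LinearMap.toMvPolynomial_isHomogeneous ..

theorem eval_coordForm (ε : Module.Basis κ K (σ → K)) (k : κ) (u : σ → K) :
    eval u (coordForm ε k) = ε.repr u k := by
  classical
  have h := LinearMap.toMvPolynomial_eval_eq_apply (Pi.basisFun K σ) ε LinearMap.id k
    ((Pi.basisFun K σ).repr u)
  rw [LinearEquiv.symm_apply_apply] at h
  exact h

open Classical in
/-- The linear change of coordinates which sends the variables to the coordinate forms of the basis
`ε`. -/
noncomputable def coordEquiv (ε : Module.Basis κ K (σ → K)) :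
    MvPolynomial κ K ≃ₐ[K] MvPolynomial σ K :=
  AlgEquiv.ofAlgHom (bind₁ (coordForm ε))
    (bind₁ (LinearMap.toMvPolynomial ε (Pi.basisFun K σ) LinearMap.id))
    (by
      ext1 i
      rw [AlgHom.comp_apply, bind₁_X_right, AlgHom.id_apply]
      exact (LinearMap.toMvPolynomial_comp _ ε _ _ _ i).symm.trans
        (congrFun (LinearMap.toMvPolynomial_id _) i))
    (by
      ext1 k
      rw [AlgHom.comp_apply, bind₁_X_right, AlgHom.id_apply]
      exact (LinearMap.toMvPolynomial_comp _ (Pi.basisFun K σ) _ _ _ k).symm.trans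
        (congrFun (LinearMap.toMvPolynomial_id _) k))

theorem coordEquiv_X (ε : Module.Basis κ K (σ → K)) (k : κ) :
    coordEquiv ε (X k) = coordForm ε k :=
  bind₁_X_right _ _

theorem eq_sum_coordForm [Infinite K] (ε : Module.Basis κ K (σ → K)) {f : MvPolynomial σ K}
    (hf : f.IsHomogeneous 1) : f = ∑ k, C (eval (ε k) f) * coordForm ε k := by
  rw [← mem_homogeneousSubmodule, homogeneousSubmodule_one_eq_span_X] at hf
  induction hf using Submodule.span_induction with
  | mem f h =>
    obtain ⟨i, rfl⟩ := h
    refine MvPolynomial.funext fun u ↦ ?_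
    simp only [eval_X, map_sum, map_mul, eval_C, eval_coordForm]
    conv_lhs => rw [← ε.sum_repr u]
    simp only [Finset.sum_apply, Pi.smul_apply, smul_eq_mul, mul_comm]
  | zero => simp
  | add f g _ _ hf hg => simp only [map_add, add_mul, Finset.sum_add_distrib, ← hf, ← hg]
  | smul a f _ hf =>
    simp only [smul_eval, C_mul, mul_assoc, ← Finset.mul_sum]
    rw [← hf, C_mul']

section Option

variable (ε : Module.Basis (Option (Option τ)) K (σ → K))

/-- The inclusion of the polynomials in all coordinates of the basis `ε` but the first two. -/
noncomputable def coordHom : MvPolynomial τ K →ₐ[K] MvPolynomial σ K :=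
  aeval fun i ↦ coordForm ε (some (some i))

theorem isHomogeneous_coordHom {n : ℕ} {a : MvPolynomial τ K} (ha : a.IsHomogeneous n) :
    (coordHom ε a).IsHomogeneous n := by
  rw [coordHom, ← one_mul n]
  exact ha.aeval _ fun i ↦ isHomogeneous_coordForm ε (some (some i))

/-- The polynomial ring as an iterated ring of univariate polynomials in the first two coordinates
of the basis `ε`, over the polynomials in the remaining ones. -/
noncomputable def coordPolyEquiv :
    MvPolynomial σ K ≃ₐ[K] Polynomial (Polynomial (MvPolynomial τ K)) :=
  (coordEquiv ε).symm.trans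
    ((optionEquivLeft K (Option τ)).trans (Polynomial.mapAlgEquiv (optionEquivLeft K τ)))

theorem coordPolyEquiv_coordForm (k : Option (Option τ)) :
    coordPolyEquiv ε (coordForm ε k) =
      (optionEquivLeft K (Option τ) (X k)).map (optionEquivLeft K τ).toRingHom := by
  rw [← coordEquiv_X, coordPolyEquiv, AlgEquiv.trans_apply, AlgEquiv.symm_apply_apply]
  rfl

theorem coordPolyEquiv_coordForm_none :
    coordPolyEquiv ε (coordForm ε none) = Polynomial.X := by
  simp [coordPolyEquiv_coordForm]

theorem coordPolyEquiv_coordForm_some_none :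
    coordPolyEquiv ε (coordForm ε (some none)) = Polynomial.C Polynomial.X := by
  simp [coordPolyEquiv_coordForm]

theorem coordPolyEquiv_coordHom (a : MvPolynomial τ K) :
    coordPolyEquiv ε (coordHom ε a) = Polynomial.C (Polynomial.C a) := by
  induction a using MvPolynomial.induction_on with
  | C r =>
    rw [algHom_C, AlgEquiv.commutes]
    rfl
  | add p q hp hq => simp only [map_add, hp, hq]
  | mul_X p i hp =>
    rw [map_mul, map_mul, hp, coordHom, aeval_X, coordPolyEquiv_coordForm]
    simp

theorem eval_coordHom (u : σ → K) (a : MvPolynomial τ K) :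
    eval u (coordHom ε a) = eval (fun i ↦ ε.repr u (some (some i))) a := by
  simp only [← eval_coordForm]
  induction a using MvPolynomial.induction_on with
  | C r => simp
  | add p q hp hq => simp only [map_add, hp, hq]
  | mul_X p i hp => rw [map_mul, map_mul, map_mul, hp, coordHom, aeval_X, eval_X]

theorem eval_coordHom_eq_zero {n : ℕ} (hn : n ≠ 0) {a : MvPolynomial τ K} (ha : a.IsHomogeneous n)
    {k : Option (Option τ)} (hk : ∀ i, k ≠ some (some i)) : eval (ε k) (coordHom ε a) = 0 := by
  have h : (fun i ↦ ε.repr (ε k) (some (some i))) = 0 := by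
    ext i
    simp [hk]
  rw [eval_coordHom, h, eval_zero_of_isHomogeneous hn ha]

variable [Infinite K] {f : MvPolynomial σ K}

theorem exists_eq_coordHom_of_isHomogeneous_one (hf : f.IsHomogeneous 1) :
    ∃ l : MvPolynomial τ K, l.IsHomogeneous 1 ∧
      f = C (eval (ε none) f) * coordForm ε none +
        C (eval (ε (some none)) f) * coordForm ε (some none) + coordHom ε l := by
  refine ⟨∑ i, C (eval (ε (some (some i))) f) * X i,
    IsHomogeneous.sum _ _ _ fun i _ ↦ (isHomogeneous_X K i).C_mul _, ?_⟩
  conv_lhs => rw [eq_sum_coordForm ε hf, Fintype.sum_option, Fintype.sum_option, ← add_assoc]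
  simp only [map_sum, map_mul, algHom_C, algebraMap_eq, coordHom, aeval_X]

theorem exists_eq_coordHom_of_isHomogeneous_two (hf : f.IsHomogeneous 2) :
    ∃ a₁ a₂ a₃ : MvPolynomial τ K, a₁.IsHomogeneous 1 ∧ a₂.IsHomogeneous 1 ∧ a₃.IsHomogeneous 2 ∧
      f = C (eval (ε none) f) * coordForm ε none ^ 2 +
        C (eval (ε none + ε (some none)) f - eval (ε none) f - eval (ε (some none)) f) *
          (coordForm ε none * coordForm ε (some none)) +
        C (eval (ε (some none)) f) * coordForm ε (some none) ^ 2 +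
        coordHom ε a₁ * coordForm ε none + coordHom ε a₂ * coordForm ε (some none) +
        coordHom ε a₃ := by
  rw [← mem_homogeneousSubmodule, ← homogeneousSubmodule_one_pow, pow_two] at hf
  induction hf using Submodule.mul_induction_on' with
  | mem_mul_mem f hf g hg =>
    have hfvw := eval_smul_add_of_isHomogeneous_one hf 1 (ε none) (ε (some none))
    have hgvw := eval_smul_add_of_isHomogeneous_one hg 1 (ε none) (ε (some none))
    rw [one_smul, one_mul] at hfvw hgvw
    obtain ⟨l, hl, hfl⟩ := exists_eq_coordHom_of_isHomogeneous_one ε hf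
    obtain ⟨m, hm, hgm⟩ := exists_eq_coordHom_of_isHomogeneous_one ε hg
    refine ⟨C (eval (ε none) f) * m + C (eval (ε none) g) * l,
      C (eval (ε (some none)) f) * m + C (eval (ε (some none)) g) * l, l * m,
      (hm.C_mul _).add (hl.C_mul _), (hm.C_mul _).add (hl.C_mul _), hl.mul hm, ?_⟩
    simp only [map_mul, map_add, map_sub, hfvw, hgvw, algHom_C, algebraMap_eq]
    conv_lhs => rw [hfl, hgm]
    ring
  | add f _ g _ hf hg =>
    obtain ⟨a₁, a₂, a₃, ha₁, ha₂, ha₃, hfa⟩ := hf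
    obtain ⟨b₁, b₂, b₃, hb₁, hb₂, hb₃, hgb⟩ := hg
    refine ⟨a₁ + b₁, a₂ + b₂, a₃ + b₃, ha₁.add hb₁, ha₂.add hb₂, ha₃.add hb₃, ?_⟩
    conv_lhs => rw [hfa, hgb]
    simp only [map_add, map_sub]
    ring

end Option

end Coordinates

section DegreeSpan

variable {K τ ι : Type*} [Field K]

section Module

variable {M : Type*} [AddCommGroup M] [Module K M] [Module (MvPolynomial τ K) M]

variable (K τ) in
/-- The part of degree at most `n` of the `K[τ]`-submodule generated by the family `g`, where
the generator `g i` is given degree `w i`. -/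
def degreeSpan (g : ι → M) (w : ι → ℕ) (n : ℕ) : Submodule K M :=
  Submodule.span K {b | ∃ i, ∃ a : MvPolynomial τ K, a.totalDegree + w i ≤ n ∧ a • g i = b}

variable {g : ι → M} {w : ι → ℕ} {m n : ℕ} {b : M} {a : MvPolynomial τ K}

theorem smul_mem_degreeSpan_of_le {i : ι} (h : a.totalDegree + w i ≤ n) :
    a • g i ∈ degreeSpan K τ g w n :=
  Submodule.subset_span ⟨i, a, h, rfl⟩

theorem mem_degreeSpan_of_eq (i : ι) (hb : g i = b) (hw : w i = n) :
    b ∈ degreeSpan K τ g w n := by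
  rw [← hb, ← one_smul (MvPolynomial τ K) (g i)]
  exact smul_mem_degreeSpan_of_le (by rw [totalDegree_one, zero_add, hw])

theorem degreeSpan_mono (g : ι → M) (w : ι → ℕ) : Monotone (degreeSpan K τ g w) :=
  fun _ _ hmn ↦ Submodule.span_mono <| by
    rintro _ ⟨i, a, ha, rfl⟩
    exact ⟨i, a, ha.trans hmn, rfl⟩

theorem degreeSpan_le_restrictScalars_span [IsScalarTower K (MvPolynomial τ K) M] :
    degreeSpan K τ g w n ≤
      (Submodule.span (MvPolynomial τ K) (Set.range g)).restrictScalars K := by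
  refine Submodule.span_le.2 ?_
  rintro _ ⟨i, a, -, rfl⟩
  exact Submodule.smul_mem _ _ (Submodule.subset_span (Set.mem_range_self i))

theorem smul_mem_degreeSpan [IsScalarTower K (MvPolynomial τ K) M] (hb : b ∈ degreeSpan K τ g w m)
    (ha : a.totalDegree + m ≤ n) : a • b ∈ degreeSpan K τ g w n := by
  have : SMulCommClass (MvPolynomial τ K) K M := IsScalarTower.to_smulCommClass'
  induction hb using Submodule.span_induction with
  | mem _ hc =>
    obtain ⟨i, c, hc, rfl⟩ := hc
    rw [smul_smul]
    have := totalDegree_mul a c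
    exact smul_mem_degreeSpan_of_le (by omega)
  | zero => rw [smul_zero]; exact zero_mem _
  | add _ _ _ _ h₁ h₂ => rw [smul_add]; exact add_mem h₁ h₂
  | smul c _ _ h => rw [smul_comm]; exact Submodule.smul_mem _ c h

end Module

variable {B : Type*} [CommRing B] [Algebra K B] [Algebra (MvPolynomial τ K) B]
  [IsScalarTower K (MvPolynomial τ K) B] {g : ι → B} {w : ι → ℕ}

theorem mul_mem_degreeSpan {s b : B} {n : ℕ} (hs : ∀ i, s * g i ∈ degreeSpan K τ g w (w i + 1))
    (hb : b ∈ degreeSpan K τ g w n) : s * b ∈ degreeSpan K τ g w (n + 1) := by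
  induction hb using Submodule.span_induction with
  | mem _ hc =>
    obtain ⟨i, c, hc, rfl⟩ := hc
    rw [mul_smul_comm]
    exact smul_mem_degreeSpan (hs i) (by omega)
  | zero => rw [mul_zero]; exact zero_mem _
  | add _ _ _ _ h₁ h₂ => rw [mul_add]; exact add_mem h₁ h₂
  | smul c _ _ h => rw [mul_smul_comm]; exact Submodule.smul_mem _ c h

theorem map_mem_degreeSpan {σ : Type*} (φ : MvPolynomial σ K →ₐ[K] B)
    (h₁ : 1 ∈ degreeSpan K τ g w 0)
    (hφ : ∀ l : MvPolynomial σ K, l.IsHomogeneous 1 → ∀ i, φ l * g i ∈ degreeSpan K τ g w (w i + 1))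
    {n : ℕ} {t : MvPolynomial σ K} (ht : t.totalDegree ≤ n) : φ t ∈ degreeSpan K τ g w n := by
  have key : ∀ m (s : MvPolynomial σ K), s.IsHomogeneous m → φ s ∈ degreeSpan K τ g w m := by
    intro m
    induction m with
    | zero =>
      intro s hs
      rw [totalDegree_eq_zero_iff_eq_C.1 (Nat.le_zero.1 hs.totalDegree_le), algHom_C,
        Algebra.algebraMap_eq_smul_one]
      exact Submodule.smul_mem _ _ h₁
    | succ m ih =>
      intro s hs
      rw [← mem_homogeneousSubmodule, ← homogeneousSubmodule_one_pow, pow_succ,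
        homogeneousSubmodule_one_pow] at hs
      refine Submodule.mul_induction_on hs (fun u hu l hl ↦ ?_) fun u v hu hv ↦ ?_
      · rw [map_mul, mul_comm]
        exact mul_mem_degreeSpan (hφ l hl) (ih u hu)
      · rw [map_add]
        exact add_mem hu hv
  rw [← sum_homogeneousComponent t, map_sum]
  refine sum_mem fun i hi ↦ degreeSpan_mono g w ?_
    (key i _ (homogeneousComponent_isHomogeneous i t))
  exact (Finset.mem_range_succ_iff.1 hi).trans ht

variable {x y : B} {b β : K} {a₁ a₂ a₃ c₁ c₂ c₃ : MvPolynomial τ K}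

theorem sq_mem_degreeSpan (h₁ : 1 ∈ degreeSpan K τ g w 0) (hx : x ∈ degreeSpan K τ g w 1)
    (hy : y ∈ degreeSpan K τ g w 1) (hxy : x * y ∈ degreeSpan K τ g w 2)
    (ha₁ : a₁.totalDegree ≤ 1) (ha₂ : a₂.totalDegree ≤ 1) (ha₃ : a₃.totalDegree ≤ 2)
    (hf : x ^ 2 + b • (x * y) + a₁ • x + a₂ • y + a₃ • (1 : B) = 0) :
    x ^ 2 ∈ degreeSpan K τ g w 2 := by
  have h : x ^ 2 = -(b • (x * y) + a₁ • x + a₂ • y + a₃ • (1 : B)) := by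
    linear_combination hf
  rw [h]
  refine neg_mem (add_mem (add_mem (add_mem (Submodule.smul_mem _ b hxy) ?_) ?_) ?_)
  · exact smul_mem_degreeSpan hx (by omega)
  · exact smul_mem_degreeSpan hy (by omega)
  · exact smul_mem_degreeSpan h₁ (by omega)

theorem sq_mul_mem_degreeSpan (hbβ : b * β ≠ 1) (hx : x ∈ degreeSpan K τ g w 1)
    (hy : y ∈ degreeSpan K τ g w 1) (hxy : x * y ∈ degreeSpan K τ g w 2)
    (hx₂ : x ^ 2 ∈ degreeSpan K τ g w 2) (hy₂ : y ^ 2 ∈ degreeSpan K τ g w 2)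
    (ha₁ : a₁.totalDegree ≤ 1) (ha₂ : a₂.totalDegree ≤ 1) (ha₃ : a₃.totalDegree ≤ 2)
    (hc₁ : c₁.totalDegree ≤ 1) (hc₂ : c₂.totalDegree ≤ 1) (hc₃ : c₃.totalDegree ≤ 2)
    (hf : x ^ 2 + b • (x * y) + a₁ • x + a₂ • y + a₃ • (1 : B) = 0)
    (hg : y ^ 2 + β • (x * y) + c₁ • x + c₂ • y + c₃ • (1 : B) = 0) :
    x ^ 2 * y ∈ degreeSpan K τ g w 3 := by
  have h : (1 - b * β) • (x ^ 2 * y) = b • (c₁ • x ^ 2 + c₂ • (x * y) + c₃ • x) -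
      (a₁ • (x * y) + a₂ • y ^ 2 + a₃ • y) := by
    simp only [Algebra.smul_def, map_sub, map_mul, map_one] at hf hg ⊢
    linear_combination y * hf - algebraMap K B b * x * hg
  have hκ : (1 - b * β) ≠ 0 := sub_ne_zero.2 hbβ.symm
  rw [← inv_smul_smul₀ hκ (x ^ 2 * y), h]
  refine Submodule.smul_mem _ _ (sub_mem (Submodule.smul_mem _ b ?_) ?_)
  · refine add_mem (add_mem ?_ ?_) ?_
    · exact smul_mem_degreeSpan hx₂ (by omega)
    · exact smul_mem_degreeSpan hxy (by omega)
    · exact smul_mem_degreeSpan hx (by omega)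
  · refine add_mem (add_mem ?_ ?_) ?_
    · exact smul_mem_degreeSpan hxy (by omega)
    · exact smul_mem_degreeSpan hy₂ (by omega)
    · exact smul_mem_degreeSpan hy (by omega)

theorem map_mem_degreeSpan_of_quadric_eq_zero {σ : Type*} (φ : MvPolynomial σ K →ₐ[K] B)
    (hφ : ∀ l : MvPolynomial σ K, l.IsHomogeneous 1 → ∃ (s t : K) (a : MvPolynomial τ K),
      a.totalDegree ≤ 1 ∧ φ l = s • x + t • y + algebraMap _ B a)
    (hbβ : b * β ≠ 1)
    (ha₁ : a₁.totalDegree ≤ 1) (ha₂ : a₂.totalDegree ≤ 1) (ha₃ : a₃.totalDegree ≤ 2)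
    (hc₁ : c₁.totalDegree ≤ 1) (hc₂ : c₂.totalDegree ≤ 1) (hc₃ : c₃.totalDegree ≤ 2)
    (hf : x ^ 2 + b • (x * y) + a₁ • x + a₂ • y + a₃ • (1 : B) = 0)
    (hg : y ^ 2 + β • (x * y) + c₁ • x + c₂ • y + c₃ • (1 : B) = 0)
    {n : ℕ} {t : MvPolynomial σ K} (ht : t.totalDegree ≤ n) :
    φ t ∈ degreeSpan K τ ![1, x, y, x * y] ![0, 1, 1, 2] n := by
  set F := degreeSpan K τ ![1, x, y, x * y] ![0, 1, 1, 2]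
  have h1 : 1 ∈ F 0 := mem_degreeSpan_of_eq 0 rfl rfl
  have hx : x ∈ F 1 := mem_degreeSpan_of_eq 1 rfl rfl
  have hy : y ∈ F 1 := mem_degreeSpan_of_eq 2 rfl rfl
  have hxy : x * y ∈ F 2 := mem_degreeSpan_of_eq 3 rfl rfl
  have hyx : y * x ∈ F 2 := by rwa [mul_comm]
  have hf' : y ^ 2 + β • (y * x) + c₂ • y + c₁ • x + c₃ • (1 : B) = 0 := by
    rw [← hg, mul_comm y x]; ring
  have hg' : x ^ 2 + b • (y * x) + a₂ • y + a₁ • x + a₃ • (1 : B) = 0 := by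
    rw [← hf, mul_comm y x]; ring
  have hx₂ : x ^ 2 ∈ F 2 := sq_mem_degreeSpan h1 hx hy hxy ha₁ ha₂ ha₃ hf
  have hy₂ : y ^ 2 ∈ F 2 := sq_mem_degreeSpan h1 hy hx hyx hc₂ hc₁ hc₃ hf'
  have hx₂y : x ^ 2 * y ∈ F 3 :=
    sq_mul_mem_degreeSpan hbβ hx hy hxy hx₂ hy₂ ha₁ ha₂ ha₃ hc₁ hc₂ hc₃ hf hg
  have hy₂x : y ^ 2 * x ∈ F 3 := sq_mul_mem_degreeSpan (by rwa [mul_comm]) hy hx hyx hy₂ hx₂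
    hc₂ hc₁ hc₃ ha₂ ha₁ ha₃ hf' hg'
  have hFx : ∀ i, x * ![1, x, y, x * y] i ∈ F (![0, 1, 1, 2] i + 1) := by
    intro i
    fin_cases i
    exacts [(mul_one x).symm ▸ hx, pow_two x ▸ hx₂, hxy,
      (by ring : x ^ 2 * y = x * (x * y)) ▸ hx₂y]
  have hFy : ∀ i, y * ![1, x, y, x * y] i ∈ F (![0, 1, 1, 2] i + 1) := by
    intro i
    fin_cases i
    exacts [(mul_one y).symm ▸ hy, hyx, pow_two y ▸ hy₂,
      (by ring : y ^ 2 * x = y * (x * y)) ▸ hy₂x]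
  refine map_mem_degreeSpan φ h1 (fun l hl i ↦ ?_) ht
  obtain ⟨s, r, a, ha, hl⟩ := hφ l hl
  rw [hl, add_mul, add_mul, smul_mul_assoc, smul_mul_assoc, ← Algebra.smul_def]
  refine add_mem (add_mem (Submodule.smul_mem _ s (hFx i)) (Submodule.smul_mem _ r (hFy i))) ?_
  exact smul_mem_degreeSpan_of_le (by omega)

end DegreeSpan

section RankBound

open Module

theorem finrank_restrictTotalDegree_le (K : Type*) [Field K] (d n : ℕ) :
    finrank K (restrictTotalDegree (Fin d) K n) ≤ (n + d).choose d := by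
  classical
  let s : Set (Fin d →₀ ℕ) := {m | (m.sum fun _ e ↦ e) ≤ n}
  let homogenize (m : s) : (Finset.univ : Finset (Fin (d + 1))).finsuppAntidiag n :=
    ⟨Finsupp.cons (n - m.1.sum fun _ e ↦ e) m.1, by
      have hm : (m.1.sum fun _ e ↦ e) ≤ n := m.2
      rw [Finset.mem_finsuppAntidiag, Fin.sum_univ_succ]
      simp only [Finsupp.cons_zero, Finsupp.cons_succ]
      rw [Finsupp.sum_fintype _ _ fun _ ↦ rfl] at hm ⊢
      exact ⟨Nat.sub_add_cancel hm, Finset.subset_univ _⟩⟩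
  have hinj : Function.Injective homogenize := fun m m' h ↦ Subtype.ext <| by
    simpa only [homogenize, Function.comp_apply, Finsupp.tail_cons]
      using congrArg (Finsupp.tail ∘ Subtype.val) h
  calc finrank K (restrictTotalDegree (Fin d) K n)
      = Nat.card s := finrank_eq_nat_card_basis (basisRestrictSupport K s)
    _ ≤ _ := Nat.card_le_card_of_injective homogenize hinj
    _ = (n + d).choose d := by
      rw [Nat.card_eq_fintype_card, Fintype.card_coe, Finset.card_finsuppAntidiag_nat_eq_choose,
        Finset.card_univ, Fintype.card_fin, show d + 1 + n - 1 = n + d by omega,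
        Nat.choose_symm_add]

theorem exists_smul_mem_span_range {A M : Type*} [CommRing A] [IsDomain A] [AddCommGroup M]
    [Module A M] [Module.Finite A M] {f : Fin (finrank A M) → M} (hf : LinearIndependent A f) :
    ∃ a : A, a ≠ 0 ∧ ∀ b, a • b ∈ Submodule.span A (Set.range f) := by
  set P := Submodule.span A (Set.range f)
  have hP : finrank A P = finrank A M := by rw [finrank_span_eq_card hf, Fintype.card_fin]
  have hquot : finrank A (M ⧸ P) = 0 := by
    have := Submodule.finrank_quotient_add_finrank P
    omega
  obtain ⟨a, ha, ha₀⟩ := Submodule.annihilator_top_inter_nonZeroDivisors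
    (Module.finrank_eq_zero_iff_isTorsion.1 hquot)
  refine ⟨a, nonZeroDivisors.ne_zero ha₀, fun b ↦ ?_⟩
  rw [← Submodule.Quotient.mk_eq_zero, Submodule.Quotient.mk_smul]
  exact Submodule.mem_annihilator.1 ha _ trivial

variable {K : Type*} [Field K] {d : ℕ} {ι M : Type*} [AddCommGroup M] [Module K M]
  [Module (MvPolynomial (Fin d) K) M] [IsScalarTower K (MvPolynomial (Fin d) K) M]

theorem exists_mem_degreeSpan_of_mem_span {τ : Type*} [Module (MvPolynomial τ K) M]
    [IsScalarTower K (MvPolynomial τ K) M] {f : ι → M} (w : ι → ℕ) {b : M}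
    (hb : b ∈ Submodule.span (MvPolynomial τ K) (Set.range f)) :
    ∃ n, b ∈ degreeSpan K τ f w n := by
  induction hb using Submodule.span_induction with
  | mem _ h =>
    obtain ⟨i, rfl⟩ := h
    exact ⟨w i, mem_degreeSpan_of_eq i rfl rfl⟩
  | zero => exact ⟨0, zero_mem _⟩
  | add _ _ _ _ h₁ h₂ =>
    obtain ⟨⟨m, hm⟩, n, hn⟩ := And.intro h₁ h₂
    exact ⟨max m n, add_mem (degreeSpan_mono f w (le_max_left m n) hm)
      (degreeSpan_mono f w (le_max_right m n) hn)⟩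
  | smul a _ _ h =>
    obtain ⟨n, hn⟩ := h
    exact ⟨a.totalDegree + n, smul_mem_degreeSpan hn le_rfl⟩

theorem exists_linearMap_degreeSpan_le_range [Finite ι] (g : ι → M) (w : ι → ℕ) (n : ℕ) :
    ∃ Φ : (ι → restrictTotalDegree (Fin d) K n) →ₗ[K] M,
      degreeSpan K (Fin d) g w n ≤ LinearMap.range Φ := by
  classical
  cases nonempty_fintype ι
  refine ⟨(Fintype.linearCombination (MvPolynomial (Fin d) K) g).restrictScalars K ∘ₗ
    LinearMap.pi fun i ↦ (restrictTotalDegree (Fin d) K n).subtype ∘ₗ LinearMap.proj i,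
    Submodule.span_le.2 ?_⟩
  rintro _ ⟨i, a, ha, rfl⟩
  have ha' : a ∈ restrictTotalDegree (Fin d) K n := by
    rw [mem_restrictTotalDegree]
    omega
  refine ⟨Pi.single i ⟨a, ha'⟩, (Finset.sum_eq_single i (fun j _ hj ↦ ?_) ?_).trans ?_⟩
  · simp [Pi.single_eq_of_ne hj]
  · exact fun h ↦ (h (Finset.mem_univ i)).elim
  · simp

theorem finite_degreeSpan [Finite ι] (g : ι → M) (w : ι → ℕ) (n : ℕ) :
    Module.Finite K (degreeSpan K (Fin d) g w n) := by
  obtain ⟨Φ, hΦ⟩ := exists_linearMap_degreeSpan_le_range (K := K) (d := d) g w n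
  exact Submodule.finiteDimensional_of_le hΦ

theorem finrank_degreeSpan_le [Fintype ι] (g : ι → M) (w : ι → ℕ) (n : ℕ) :
    finrank K (degreeSpan K (Fin d) g w n) ≤ Fintype.card ι * (n + d).choose d := by
  obtain ⟨Φ, hΦ⟩ := exists_linearMap_degreeSpan_le_range (K := K) (d := d) g w n
  calc finrank K (degreeSpan K (Fin d) g w n)
      ≤ finrank K (LinearMap.range Φ) := Submodule.finrank_mono hΦ
    _ ≤ finrank K (ι → restrictTotalDegree (Fin d) K n) := LinearMap.finrank_range_le Φ
    _ = Fintype.card ι * finrank K (restrictTotalDegree (Fin d) K n) := by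
      rw [finrank_pi_fintype, Finset.sum_const, Finset.card_univ, smul_eq_mul]
    _ ≤ _ := Nat.mul_le_mul_left _ (finrank_restrictTotalDegree_le K d n)

theorem exists_finrank_degreeSpan_le_finrank_mul [Finite ι]
    [Module.Finite (MvPolynomial (Fin d) K) M]
    [Module.IsTorsionFree (MvPolynomial (Fin d) K) M] (g : ι → M) (w : ι → ℕ) :
    ∃ c, ∀ n, finrank K (degreeSpan K (Fin d) g w n) ≤
      finrank (MvPolynomial (Fin d) K) M * (n + c + d).choose d := by
  set A := MvPolynomial (Fin d) K
  obtain ⟨f, hf⟩ := exists_linearIndependent_of_le_finrank (R := A) (M := M) le_rfl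
  obtain ⟨a, ha, haf⟩ := exists_smul_mem_span_range hf
  choose k hk using fun i ↦ exists_mem_degreeSpan_of_mem_span (fun _ ↦ 0) (haf (g i))
  obtain ⟨c, hc⟩ := Finite.exists_le k
  refine ⟨c, fun n ↦ ?_⟩
  let mulLeft : M →ₗ[K] M := (LinearMap.lsmul A M a).restrictScalars K
  have hinj : Function.Injective mulLeft := smul_right_injective M ha
  have hmap : (degreeSpan K (Fin d) g w n).map mulLeft ≤
      degreeSpan K (Fin d) f (fun _ ↦ 0) (n + c) := by
    refine (Submodule.map_span_le _ _ _).2 ?_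
    rintro _ ⟨i, u, hu, rfl⟩
    rw [show mulLeft (u • g i) = u • a • g i from smul_comm ..]
    have := hc i
    exact smul_mem_degreeSpan (hk i) (by omega)
  have := finite_degreeSpan (K := K) (d := d) f (fun _ ↦ 0) (n + c)
  calc finrank K (degreeSpan K (Fin d) g w n)
      = finrank K ((degreeSpan K (Fin d) g w n).map mulLeft) :=
        (Submodule.equivMapOfInjective mulLeft hinj _).finrank_eq
    _ ≤ finrank K (degreeSpan K (Fin d) f (fun _ ↦ 0) (n + c)) := Submodule.finrank_mono hmap
    _ ≤ _ := by
      simpa only [Fintype.card_fin] using finrank_degreeSpan_le f (fun _ ↦ 0) (n + c)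

end RankBound

section Asymptotics

theorem coeff_nonpos_of_eventually_eval_nonpos {Q : Polynomial ℚ} {D : ℕ} (hQ : Q.natDegree ≤ D)
    (h : ∀ᶠ n : ℕ in atTop, Q.eval (n : ℚ) ≤ 0) : Q.coeff D ≤ 0 := by
  by_contra! hpos
  have hdeg : Q.natDegree = D := le_antisymm hQ (Polynomial.le_natDegree_of_ne_zero hpos.ne')
  have hlead : 0 < Q.leadingCoeff := by rwa [Polynomial.leadingCoeff, hdeg]
  have hev : ∀ᶠ n : ℕ in atTop, 0 < Q.eval (n : ℚ) := by
    rcases Nat.eq_zero_or_pos D with rfl | hD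
    · rw [Polynomial.eq_C_of_natDegree_eq_zero hdeg]
      simpa only [Polynomial.eval_C] using Eventually.of_forall fun _ ↦ hpos
    · have hdeg' : 0 < Q.degree := Polynomial.natDegree_pos_iff_degree_pos.1 (hdeg ▸ hD)
      exact tendsto_natCast_atTop_atTop.eventually
        ((Q.tendsto_atTop_of_leadingCoeff_nonneg hdeg' hlead.le).eventually_gt_atTop 0)
  obtain ⟨n, hn, hn'⟩ := (hev.and h).exists
  exact hn.not_ge hn'

theorem leadingCoeff_mul_factorial_le_of_eval_le_mul_choose {P : Polynomial ℚ} {d r c : ℕ}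
    (hd : d ≤ P.natDegree)
    (h : ∀ᶠ n : ℕ in atTop, P.eval ((n + 1 : ℕ) : ℚ) ≤ r * ((n + c + d).choose d : ℕ)) :
    P.leadingCoeff * P.natDegree.factorial ≤ r := by
  set D := P.natDegree
  let L : Polynomial ℚ := (Polynomial.X + Polynomial.C ((c + d : ℕ) : ℚ)) ^ d
  let T : Polynomial ℚ := Polynomial.C (r / d.factorial : ℚ) * L
  let S : Polynomial ℚ := P.comp (Polynomial.X + Polynomial.C 1)
  have hL : L.Monic := (Polynomial.monic_X_add_C _).pow d
  have hLd : L.natDegree = d := by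
    rw [Polynomial.natDegree_pow, Polynomial.natDegree_X_add_C, mul_one]
  have hTd : T.natDegree ≤ d := (Polynomial.natDegree_C_mul_le _ _).trans hLd.le
  have hSd : S.natDegree = D := by
    rw [Polynomial.natDegree_comp, Polynomial.natDegree_X_add_C, mul_one]
  have hSl : S.coeff D = P.leadingCoeff := by
    rw [← hSd, Polynomial.coeff_natDegree, Polynomial.leadingCoeff_comp
      (by rw [Polynomial.natDegree_X_add_C]; exact one_ne_zero), Polynomial.leadingCoeff_X_add_C,
      one_pow, mul_one]
  have hTl : T.coeff D * D.factorial ≤ r := by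
    rcases hd.lt_or_eq with hlt | heq
    · rw [Polynomial.coeff_eq_zero_of_natDegree_lt (hTd.trans_lt hlt), zero_mul]
      exact r.cast_nonneg
    · rw [← heq, Polynomial.coeff_C_mul, ← hLd, hL.coeff_natDegree, hLd, mul_one,
        div_mul_cancel₀ _ (by positivity)]
  have hST : (S - T).coeff D ≤ 0 := by
    refine coeff_nonpos_of_eventually_eval_nonpos
      ((Polynomial.natDegree_sub_le _ _).trans (max_le hSd.le (hTd.trans hd)))
      (h.mono fun n hn ↦ ?_)
    have hchoose := Nat.choose_le_pow_div (α := ℚ) d (n + c + d)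
    have hS : S.eval (n : ℚ) = P.eval ((n + 1 : ℕ) : ℚ) := by simp [S]
    have hT : T.eval (n : ℚ) = r * (((n + c + d : ℕ) : ℚ) ^ d / d.factorial) := by
      simp only [T, L, Polynomial.eval_mul, Polynomial.eval_C, Polynomial.eval_pow,
        Polynomial.eval_add, Polynomial.eval_X]
      push_cast
      ring
    rw [Polynomial.eval_sub, hS, hT, sub_nonpos]
    exact hn.trans (mul_le_mul_of_nonneg_left hchoose r.cast_nonneg)
  rw [Polynomial.coeff_sub, hSl, sub_nonpos] at hST
  exact (mul_le_mul_of_nonneg_right hST (Nat.cast_nonneg _)).trans hTl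

end Asymptotics

section Multiplicity

theorem ringKrullDim_le_of_isIntegral {A B : Type*} [CommRing A] [CommRing B] [IsDomain B]
    [Algebra A B] [Algebra.IsIntegral A B] (h : Function.Injective (algebraMap A B)) :
    ringKrullDim A ≤ ringKrullDim B := by
  refine iSup_le fun l ↦ ?_
  obtain ⟨Q, -, hQ, hQl⟩ := Ideal.exists_ideal_over_prime_of_isIntegral_of_isPrime
    l.head.asIdeal (⊥ : Ideal B) (by
      rw [← RingHom.ker_eq_comap_bot, (RingHom.injective_iff_ker_eq_bot _).1 h]; exact bot_le)
  have : Q.LiesOver l.head.asIdeal := ⟨hQl.symm⟩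
  obtain ⟨L, hL, -⟩ := Ideal.exists_ltSeries_of_hasGoingUp l Q
  rw [← hL]
  exact le_iSup (fun L : LTSeries (PrimeSpectrum B) ↦ (L.length : WithBot ℕ∞)) L

variable {K σ : Type*} [Field K]

theorem exists_sub_mem_maxIdeal_pow (t : MvPolynomial σ K) (n : ℕ) :
    ∃ s ∈ restrictTotalDegree σ K n, t - s ∈ maxIdeal K σ ^ (n + 1) := by
  refine ⟨∑ i ∈ Finset.range (n + 1), homogeneousComponent i t, ?_, ?_⟩
  · rw [mem_restrictTotalDegree]
    refine totalDegree_finsetSum_le fun i hi ↦ ?_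
    exact (homogeneousComponent_isHomogeneous i t).totalDegree_le.trans
      (Finset.mem_range_succ_iff.1 hi)
  · refine (mem_pow_idealOfVars_iff' _ _).2 fun x hx ↦ ?_
    rw [coeff_sub, coeff_sum]
    simp only [coeff_homogeneousComponent]
    rw [Finset.sum_ite_eq, if_pos (Finset.mem_range.2 hx), sub_self]

variable [Finite σ] {B : Type*} [CommRing B] [Algebra K B] {φ : MvPolynomial σ K →ₐ[K] B}

theorem le_finrank_map_restrictTotalDegree (hφ : Function.Surjective φ) {n k : ℕ}
    (h : moduleLength (MvPolynomial σ K)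
      (MvPolynomial σ K ⧸ (RingHom.ker φ ⊔ maxIdeal K σ ^ (n + 1))) = ((k : ℕ∞) : WithBot ℕ∞)) :
    k ≤ Module.finrank K ((restrictTotalDegree σ K n).map φ.toLinearMap) := by
  set J := RingHom.ker φ ⊔ maxIdeal K σ ^ (n + 1)
  set V := (restrictTotalDegree σ K n).map φ.toLinearMap
  have hJ : RingHom.ker φ ≤ RingHom.ker (Ideal.Quotient.mkₐ K J) := fun _ ht ↦
    Ideal.Quotient.eq_zero_iff_mem.2 (Ideal.mem_sup_left ht)
  let ψ : V →ₗ[K] MvPolynomial σ K ⧸ J :=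
    (AlgHom.liftOfSurjective φ hφ (Ideal.Quotient.mkₐ K J) hJ).toLinearMap ∘ₗ V.subtype
  have hψ : Function.Surjective ψ := by
    intro x
    obtain ⟨t, rfl⟩ := Ideal.Quotient.mk_surjective x
    obtain ⟨s, hs, hts⟩ := exists_sub_mem_maxIdeal_pow t n
    refine ⟨⟨_, Submodule.mem_map_of_mem hs⟩, ?_⟩
    exact (AlgHom.liftOfSurjective_apply φ hφ _ hJ s).trans
      (Ideal.Quotient.eq.2 (Ideal.mem_sup_right hts)).symm
  have hlength : (k : ℕ∞) = Module.length (MvPolynomial σ K) (MvPolynomial σ K ⧸ J) := by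
    rw [moduleLength, ← Module.coe_length] at h
    exact_mod_cast h.symm
  have hrestrict : Module.length (MvPolynomial σ K) (MvPolynomial σ K ⧸ J) ≤
      Module.length K (MvPolynomial σ K ⧸ J) := by
    have := Submodule.length_le_length_restrictScalars (R := MvPolynomial σ K) K
      (⊤ : Submodule (MvPolynomial σ K) (MvPolynomial σ K ⧸ J))
    rw [Submodule.restrictScalars_top] at this
    simpa only [Module.length_top] using this
  have hfinrank := Module.length_le_of_surjective ψ hψ
  rw [Module.length_eq_finrank K V] at hfinrank
  exact_mod_cast hlength.le.trans (hrestrict.trans hfinrank)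

theorem le_finrank_of_isHSMultiplicity [IsDomain B] {d e : ℕ} {ι : Type*} [Finite ι]
    [Algebra (MvPolynomial (Fin d) K) B] [IsScalarTower K (MvPolynomial (Fin d) K) B]
    [Module.Finite (MvPolynomial (Fin d) K) B] [Module.IsTorsionFree (MvPolynomial (Fin d) K) B]
    (hφ : Function.Surjective φ) {g : ι → B} {w : ι → ℕ}
    (hg : ∀ n t, t.totalDegree ≤ n → φ t ∈ degreeSpan K (Fin d) g w n)
    (he : IsHSMultiplicity (MvPolynomial σ K) (maxIdeal K σ) (RingHom.ker φ) e) :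
    e ≤ Module.finrank (MvPolynomial (Fin d) K) B := by
  obtain ⟨_, P, hdim, rfl, heP, hP⟩ := he
  have hd : d ≤ P.natDegree := by
    have := ringKrullDim_le_of_isIntegral
      (FaithfulSMul.algebraMap_injective (MvPolynomial (Fin d) K) B)
    rw [← ringKrullDim_eq_of_ringEquiv (Ideal.quotientKerAlgEquivOfSurjective hφ).toRingEquiv,
      hdim, MvPolynomial.ringKrullDim_of_isNoetherianRing, ringKrullDim_eq_zero_of_field, zero_add,
      Nat.card_fin] at this
    exact_mod_cast this
  obtain ⟨c, hc⟩ := exists_finrank_degreeSpan_le_finrank_mul (K := K) (d := d) g w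
  have hle : ∀ n, (restrictTotalDegree σ K n).map φ.toLinearMap ≤ degreeSpan K (Fin d) g w n :=
    fun n ↦ Submodule.map_le_iff_le_comap.2 fun t ht ↦ hg n t ((mem_restrictTotalDegree _ _ _).1 ht)
  have key := leadingCoeff_mul_factorial_le_of_eval_le_mul_choose (c := c) hd
    (r := Module.finrank (MvPolynomial (Fin d) K) B) <| by
    filter_upwards [(tendsto_add_atTop_nat 1).eventually hP] with n ⟨k, hk, hlength⟩
    have := finite_degreeSpan (K := K) (d := d) g w n
    rw [← hk]
    exact_mod_cast (le_finrank_map_restrictTotalDegree hφ hlength).trans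
      ((Submodule.finrank_mono (hle n)).trans (hc n))
  rw [← heP] at key
  exact_mod_cast key

end Multiplicity

section NormalPair

variable {K σ τ : Type*} [Field K] [Infinite K] [Fintype σ] [Fintype τ]
  {ε : Module.Basis (Option (Option τ)) K (σ → K)} {f₁ f₂ : MvPolynomial σ K}

theorem IsNormalPair.exists_eq (h : IsNormalPair f₁ f₂ (ε none) (ε (some none))) :
    ∃ (b β : K) (a₁ a₂ a₃ c₁ c₂ c₃ : MvPolynomial τ K), b * β ≠ 1 ∧
      (a₁.IsHomogeneous 1 ∧ a₂.IsHomogeneous 1 ∧ a₃.IsHomogeneous 2) ∧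
      (c₁.IsHomogeneous 1 ∧ c₂.IsHomogeneous 1 ∧ c₃.IsHomogeneous 2) ∧
      f₁ = coordForm ε none ^ 2 + C b * (coordForm ε none * coordForm ε (some none)) +
        coordHom ε a₁ * coordForm ε none + coordHom ε a₂ * coordForm ε (some none) +
        coordHom ε a₃ ∧
      f₂ = coordForm ε (some none) ^ 2 + C β * (coordForm ε none * coordForm ε (some none)) +
        coordHom ε c₁ * coordForm ε none + coordHom ε c₂ * coordForm ε (some none) +
        coordHom ε c₃ := by
  obtain ⟨a₁, a₂, a₃, ha₁, ha₂, ha₃, hf₁⟩ :=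
    exists_eq_coordHom_of_isHomogeneous_two ε h.isHomogeneous_left
  obtain ⟨c₁, c₂, c₃, hc₁, hc₂, hc₃, hf₂⟩ :=
    exists_eq_coordHom_of_isHomogeneous_two ε h.isHomogeneous_right
  rw [h.eval_left_left, h.eval_right_left] at hf₁
  rw [h.eval_left_right, h.eval_right_right] at hf₂
  refine ⟨_, _, a₁, a₂, a₃, c₁, c₂, c₃, h.mul_ne_one, ⟨ha₁, ha₂, ha₃⟩, ⟨hc₁, hc₂, hc₃⟩,
    hf₁.trans ?_, hf₂.trans ?_⟩
  · simp only [C_1, C_0, sub_zero]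
    ring
  · simp only [C_1, C_0, sub_zero]
    ring

theorem IsNormalPair.map_mem_degreeSpan (h : IsNormalPair f₁ f₂ (ε none) (ε (some none)))
    {B : Type*} [CommRing B] [Algebra K B] [Algebra (MvPolynomial τ K) B]
    [IsScalarTower K (MvPolynomial τ K) B] {φ : MvPolynomial σ K →ₐ[K] B}
    (hφ : ∀ a, algebraMap (MvPolynomial τ K) B a = φ (coordHom ε a)) (h₁ : φ f₁ = 0)
    (h₂ : φ f₂ = 0) {n : ℕ} {t : MvPolynomial σ K} (ht : t.totalDegree ≤ n) :
    φ t ∈ degreeSpan K τ ![1, φ (coordForm ε none), φ (coordForm ε (some none)),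
      φ (coordForm ε none) * φ (coordForm ε (some none))] ![0, 1, 1, 2] n := by
  have hC (s : K) : φ (C s) = algebraMap K B s := φ.commutes s
  obtain ⟨b, β, a₁, a₂, a₃, c₁, c₂, c₃, hbβ, ⟨ha₁, ha₂, ha₃⟩, ⟨hc₁, hc₂, hc₃⟩, rfl, rfl⟩ :=
    h.exists_eq
  refine map_mem_degreeSpan_of_quadric_eq_zero φ (fun l hl ↦ ?_) hbβ ha₁.totalDegree_le
    ha₂.totalDegree_le ha₃.totalDegree_le hc₁.totalDegree_le hc₂.totalDegree_le hc₃.totalDegree_le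
    ?_ ?_ ht
  · obtain ⟨a, ha, hla⟩ := exists_eq_coordHom_of_isHomogeneous_one ε hl
    refine ⟨eval (ε none) l, eval (ε (some none)) l, a, ha.totalDegree_le,
      (congrArg φ hla).trans ?_⟩
    simp only [map_add, map_mul, hC, hφ, Algebra.smul_def]
  · simpa only [map_add, map_mul, map_pow, hC, ← hφ, Algebra.smul_def, mul_one] using h₁
  · simpa only [map_add, map_mul, map_pow, hC, ← hφ, Algebra.smul_def, mul_one] using h₂

theorem IsNormalPair.mem_span_of_coordHom_mul_mem
    (h : IsNormalPair f₁ f₂ (ε none) (ε (some none))) {a : MvPolynomial τ K} (ha : a ≠ 0)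
    {g : MvPolynomial σ K} (hg : coordHom ε a * g ∈ Ideal.span {f₁, f₂}) :
    g ∈ Ideal.span {f₁, f₂} := by
  have hC (s : K) : coordPolyEquiv ε (C s) = Polynomial.C (Polynomial.C (C s)) :=
    (coordPolyEquiv ε).commutes s
  have hmem (t : MvPolynomial σ K) : t ∈ Ideal.span {f₁, f₂} ↔
      coordPolyEquiv ε t ∈ Ideal.span {coordPolyEquiv ε f₁, coordPolyEquiv ε f₂} := by
    rw [← Set.image_pair, ← Ideal.map_span, Ideal.mem_map_of_equiv]
    simp
  obtain ⟨b, β, a₁, a₂, a₃, c₁, c₂, c₃, hbβ, -, -, hf₁, hf₂⟩ := h.exists_eq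
  have hunit : IsUnit (1 - C b * C β : MvPolynomial τ K) := by
    rw [← C_mul, ← C_1, ← C_sub]
    exact (IsUnit.mk0 _ (sub_ne_zero.2 hbβ.symm)).map C
  rw [hmem, map_mul, coordPolyEquiv_coordHom] at hg
  rw [hmem]
  have h₁ := congrArg (coordPolyEquiv ε) hf₁
  have h₂ := congrArg (coordPolyEquiv ε) hf₂
  simp only [map_add, map_mul, map_pow, hC, coordPolyEquiv_coordHom] at h₁ h₂
  exact mem_span_quadric_pair_of_C_C_mul_mem hunit (coordPolyEquiv_coordForm_none ε)
    (coordPolyEquiv_coordForm_some_none ε) h₁ h₂ ha hg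

theorem IsNormalPair.eq_zero_of_coordHom_mem (h : IsNormalPair f₁ f₂ (ε none) (ε (some none)))
    {p : Ideal (MvPolynomial σ K)} (hp : p ∈ (Ideal.span {f₁, f₂}).minimalPrimes)
    {a : MvPolynomial τ K} (ha : coordHom ε a ∈ p) : a = 0 := by
  by_contra ha₀
  obtain ⟨t, ht, hat⟩ := Ideal.exists_mul_mem_of_mem_minimalPrimes hp ha
  exact ht (h.mem_span_of_coordHom_mul_mem ha₀ hat)

end NormalPair

section CommonMultiplier

variable {A : Type*} [CommRing A] [IsDomain A] [IsIntegrallyClosed A] [IsNoetherianRing A]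

theorem exists_sub_algebraMap_mul_eq_zero_of_finrank_le_one {E : Type*} [CommRing E] [Algebra A E]
    [Module.Finite A E] [Module.IsTorsionFree A E] {I : Ideal E} (hI : Module.finrank A I ≤ 1)
    (y : E) : ∃ α : A, ∀ r ∈ I, (y - algebraMap A E α) * r = 0 := by
  have : Module.Finite A I :=
    Module.Finite.of_injective (I.subtype.restrictScalars A) Subtype.val_injective
  have : Module.IsTorsionFree A I :=
    Subtype.val_injective.moduleIsTorsionFree (Subtype.val : I → E) fun _ _ ↦ rfl
  obtain ⟨α, hα⟩ := exists_eq_smul_of_finrank_le_one hI (Algebra.lsmul A A I y)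
  refine ⟨α, fun r hr ↦ ?_⟩
  rw [sub_mul, sub_eq_zero, ← Algebra.smul_def]
  exact congrArg Subtype.val (hα ⟨r, hr⟩)

theorem exists_sub_algebraMap_mul_mem_of_finrank_le {R : Type*} [CommRing R] [Algebra A R]
    {Q p : Ideal R} (hQp : Q ≤ p) [Module.Finite A (R ⧸ Q)] [Module.IsTorsionFree A (R ⧸ Q)]
    (h : Module.finrank A (R ⧸ Q) ≤ Module.finrank A (R ⧸ p) + 1) (y : R) :
    ∃ α : A, ∀ r ∈ p, (y - algebraMap A R α) * r ∈ Q := by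
  let π : R ⧸ Q →ₐ[A] R ⧸ p := Ideal.Quotient.factorₐ A hQp
  have hπ : Function.Surjective π := Ideal.Quotient.factor_surjective hQp
  have hker : Module.finrank A (RingHom.ker π) ≤ 1 := by
    have := (LinearMap.ker π.toLinearMap).finrank_quotient_add_finrank
    rw [(π.toLinearMap.quotKerEquivOfSurjective hπ).finrank_eq] at this
    exact Nat.le_of_add_le_add_left (this.trans_le h)
  obtain ⟨α, hα⟩ :=
    exists_sub_algebraMap_mul_eq_zero_of_finrank_le_one hker (Ideal.Quotient.mk Q y)
  refine ⟨α, fun r hr ↦ Ideal.Quotient.eq_zero_iff_mem.1 ?_⟩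
  rw [map_mul, map_sub]
  exact hα _ (Ideal.Quotient.eq_zero_iff_mem.2 hr)

end CommonMultiplier

section Multiplier

variable {K σ : Type*} [Field K]

theorem span_range_eq_top_of_map_mem_degreeSpan {τ ι B : Type*} [CommRing B] [Algebra K B]
    [Algebra (MvPolynomial τ K) B] [IsScalarTower K (MvPolynomial τ K) B]
    {φ : MvPolynomial σ K →ₐ[K] B} (hφ : Function.Surjective φ) {g : ι → B} {w : ι → ℕ}
    (hg : ∀ n t, t.totalDegree ≤ n → φ t ∈ degreeSpan K τ g w n) :
    Submodule.span (MvPolynomial τ K) (Set.range g) = ⊤ := by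
  refine eq_top_iff.2 fun x _ ↦ ?_
  obtain ⟨t, rfl⟩ := hφ x
  exact degreeSpan_le_restrictScalars_span (hg _ t le_rfl)

variable [Infinite K] [Fintype σ] {d : ℕ}
  {ε : Module.Basis (Option (Option (Fin d))) K (σ → K)} {f₁ f₂ : MvPolynomial σ K}

theorem IsNormalPair.exists_sub_coordHom_mul_mem (h : IsNormalPair f₁ f₂ (ε none) (ε (some none)))
    {p : Ideal (MvPolynomial σ K)} (hp : p ∈ (Ideal.span {f₁, f₂}).minimalPrimes) {e : ℕ}
    (he : IsHSMultiplicity (MvPolynomial σ K) (maxIdeal K σ) p e) (he₃ : 3 ≤ e)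
    (y : MvPolynomial σ K) :
    ∃ α, ∀ r ∈ p, (y - coordHom ε α) * r ∈ Ideal.span {f₁, f₂} := by
  have := hp.isPrime
  have hQp : Ideal.span {f₁, f₂} ≤ p := hp.1.2
  set A := MvPolynomial (Fin d) K
  set Q := Ideal.span {f₁, f₂}
  let : Algebra A (MvPolynomial σ K) := (coordHom ε).toRingHom.toAlgebra
  have : IsScalarTower K A (MvPolynomial σ K) :=
    IsScalarTower.of_algebraMap_eq fun x ↦ ((coordHom ε).commutes x).symm
  have hgen (J : Ideal (MvPolynomial σ K)) (hJ : Q ≤ J) (n : ℕ) (t : MvPolynomial σ K)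
      (ht : t.totalDegree ≤ n) :=
    h.map_mem_degreeSpan (φ := Ideal.Quotient.mkₐ K J) (fun _ ↦ rfl)
      (Ideal.Quotient.eq_zero_iff_mem.2 (hJ (Ideal.subset_span (by simp))))
      (Ideal.Quotient.eq_zero_iff_mem.2 (hJ (Ideal.subset_span (by simp)))) ht
  have hspan (J : Ideal (MvPolynomial σ K)) (hJ : Q ≤ J) :=
    span_range_eq_top_of_map_mem_degreeSpan (Ideal.Quotient.mkₐ_surjective K J) (hgen J hJ)
  have hfinite (J : Ideal (MvPolynomial σ K)) (hJ : Q ≤ J) :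
      Module.Finite A (MvPolynomial σ K ⧸ J) :=
    Module.finite_def.2 (hspan J hJ ▸ Submodule.fg_span (Set.finite_range _))
  have := hfinite Q le_rfl
  have := hfinite p hQp
  have : Module.IsTorsionFree A (MvPolynomial σ K ⧸ Q) := by
    refine Module.isTorsionFree_iff_smul_eq_zero.2 fun a x hax ↦ or_iff_not_imp_left.2 fun ha ↦ ?_
    obtain ⟨t, rfl⟩ := Ideal.Quotient.mk_surjective x
    exact Ideal.Quotient.eq_zero_iff_mem.2
      (h.mem_span_of_coordHom_mul_mem ha (Ideal.Quotient.eq_zero_iff_mem.1 hax))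
  have : Module.IsTorsionFree A (MvPolynomial σ K ⧸ p) :=
    Module.isTorsionFree_iff_algebraMap_injective.2 <| (injective_iff_map_eq_zero _).2 fun a ha ↦
      h.eq_zero_of_coordHom_mem hp (Ideal.Quotient.eq_zero_iff_mem.1 ha)
  have hrank_le : Module.finrank A (MvPolynomial σ K ⧸ Q) ≤ 4 := by
    rw [← finrank_top, ← hspan Q le_rfl]
    exact finrank_range_le_card _
  have hle_rank : e ≤ Module.finrank A (MvPolynomial σ K ⧸ p) := by
    refine le_finrank_of_isHSMultiplicity (Ideal.Quotient.mkₐ_surjective K p) (hgen p hQp) ?_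
    convert he
    ext t
    exact Ideal.Quotient.eq_zero_iff_mem
  exact exists_sub_algebraMap_mul_mem_of_finrank_le (A := A) hQp (by omega) y

end Multiplier

section CohenMacaulay

variable {K σ : Type*} [Field K]

section

variable [Fintype σ] {τ : Type*} [Fintype τ] {ε : Module.Basis (Option (Option τ)) K (σ → K)}
  {f₁ f₂ : MvPolynomial σ K}

theorem exists_isHomogeneous_sub_coordHom_mul_mem {m n : ℕ} (hf₁ : f₁.IsHomogeneous n)
    (hf₂ : f₂.IsHomogeneous n) {S : Set (MvPolynomial σ K)} (hS : ∀ q ∈ S, q.IsHomogeneous n)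
    {y : MvPolynomial σ K} (hy : y.IsHomogeneous m) {α : MvPolynomial τ K}
    (hα : ∀ q ∈ S, (y - coordHom ε α) * q ∈ Ideal.span {f₁, f₂}) :
    ∃ l : MvPolynomial τ K, l.IsHomogeneous m ∧
      ∀ q ∈ S, (y - coordHom ε l) * q ∈ Ideal.span {f₁, f₂} := by
  refine ⟨homogeneousComponent m α, homogeneousComponent_isHomogeneous m α, fun q hq ↦ ?_⟩
  have hcomp : homogeneousComponent m (coordHom ε α) = coordHom ε (homogeneousComponent m α) :=
    homogeneousComponent_apply_of_isHomogeneous (n := 0) (coordHom ε).toLinearMap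
      (fun _ _ ha ↦ isHomogeneous_coordHom ε ha) m α
  obtain ⟨a, b, -, -, hab⟩ :=
    exists_isHomogeneous_homogeneousComponent_mul_eq hf₁ hf₂ (hS q hq) (hα q hq) m
  rw [map_sub, homogeneousComponent_eq_self hy, hcomp] at hab
  exact Ideal.mem_span_pair.2 ⟨a, b, hab.symm⟩

theorem IsNormalPair.pdLE_two (h : IsNormalPair f₁ f₂ (ε none) (ε (some none)))
    (hf : IsRelPrime f₁ f₂) {S : Set (MvPolynomial σ K)} (hS : ∀ q ∈ S, q.IsHomogeneous 2)
    (hf₁S : f₁ ∈ Ideal.span S) (hf₂S : f₂ ∈ Ideal.span S)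
    (hmul : ∀ y, ∃ α, ∀ q ∈ S, (y - coordHom ε α) * q ∈ Ideal.span {f₁, f₂}) :
    PdLE (MvPolynomial σ K) 2 (MvPolynomial σ K ⧸ Ideal.span S) := by
  have hlin (k : Option (Option τ)) :
      ∃ x : MvPolynomial σ K, x.IsHomogeneous 1 ∧ (∀ q ∈ S, x * q ∈ Ideal.span {f₁, f₂}) ∧
        ∀ j, (∀ i, j ≠ some (some i)) → eval (ε j) x = ε.repr (ε j) k := by
    obtain ⟨α, hα⟩ := hmul (coordForm ε k)
    obtain ⟨l, hl, hlS⟩ :=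
      exists_isHomogeneous_sub_coordHom_mul_mem h.isHomogeneous_left h.isHomogeneous_right hS
        (isHomogeneous_coordForm ε k) hα
    refine ⟨_, (isHomogeneous_coordForm ε k).sub (isHomogeneous_coordHom ε hl), hlS, fun j hj ↦ ?_⟩
    rw [map_sub, eval_coordForm, eval_coordHom_eq_zero ε one_ne_zero hl hj, sub_zero]
  obtain ⟨x, hx, hxS, hxε⟩ := hlin none
  obtain ⟨y, hy, hyS, hyε⟩ := hlin (some none)
  have hxv : eval (ε none) x ≠ 0 := by simp [hxε none]
  have hxw : eval (ε (some none)) x = 0 := by simp [hxε (some none)]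
  have hyw : eval (ε (some none)) y ≠ 0 := by simp [hyε (some none)]
  exact pdLE_two_of_linked (m := 1) h.isHomogeneous_left h.isHomogeneous_right
    h.left_ne_zero h.right_ne_zero hf hx hy (ne_of_apply_ne (eval _) (by rwa [map_zero]))
    (isRelPrime_of_eval_eq hx hy hxv hxw hyw) hS hf₁S hf₂S hxS hyS

end

theorem exists_isNormalPair_of_one_lt_height [Infinite K] [Finite σ] {S : Set (MvPolynomial σ K)}
    (hS : ∀ q ∈ S, q.IsHomogeneous 2) (hht : 1 < (Ideal.span S).height) :
    ∃ f₁ f₂ v w, f₁ ∈ Ideal.span S ∧ f₂ ∈ Ideal.span S ∧ IsRelPrime f₁ f₂ ∧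
      IsNormalPair f₁ f₂ v w := by
  have hspan : Ideal.span (Submodule.span K S : Set (MvPolynomial σ K)) = Ideal.span S :=
    Submodule.span_span_of_tower K (MvPolynomial σ K) S
  obtain ⟨q₁, hq₁S, hq₁⟩ : ∃ q ∈ S, q ≠ 0 := by
    by_contra! h
    rw [Ideal.span_eq_bot.2 h, Ideal.height_bot] at hht
    exact not_lt_zero hht
  obtain ⟨q₂, hq₂, hq⟩ := exists_isRelPrime_of_one_lt_height (hspan.symm ▸ hht) hq₁
  have hV : Submodule.span K S ≤ homogeneousSubmodule σ K 2 := Submodule.span_le.2 hS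
  obtain ⟨f₁, f₂, v, w, hf₁, hf₂, hf, h⟩ :=
    exists_isNormalPair (fun q hq ↦ hV hq) (Submodule.subset_span hq₁S) hq₂ hq₁ hq
  exact ⟨f₁, f₂, v, w, hspan ▸ Ideal.subset_span hf₁, hspan ▸ Ideal.subset_span hf₂, hf, h⟩

end CohenMacaulay

theorem stmt4_general {K σ : Type*} [Field K] [Infinite K] [Finite σ] {S : Set (MvPolynomial σ K)}
    (hS : ∀ f ∈ S, f.IsHomogeneous 2) (hht : idealHeight (Ideal.span S) = 2)
    {p : Ideal (MvPolynomial σ K)} (hp : p.IsPrime) (hSp : Ideal.span S ≤ p)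
    (hpht : idealHeight p = 2) {e : ℕ} (he₃ : 3 ≤ e)
    (he : IsHSMultiplicity (MvPolynomial σ K) (maxIdeal K σ) p e) :
    projDim (MvPolynomial σ K) (MvPolynomial σ K ⧸ Ideal.span S) = 2 := by
  have := Fintype.ofFinite σ
  rw [idealHeight_eq_height] at hht hpht
  obtain ⟨f₁, f₂, v, w, hf₁S, hf₂S, hf, h⟩ := exists_isNormalPair_of_one_lt_height hS
    (hht ▸ Nat.one_lt_ofNat)
  obtain ⟨d, ε, rfl, rfl⟩ := exists_basis_none_eq_and_some_none_eq h.linearIndependent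
  have hpmin := mem_minimalPrimes_of_isRelPrime hpht (hSp hf₁S) (hSp hf₂S) hf h.left_ne_zero
  refine projDim_quotient_eq_two (ne_top_of_le_ne_top hp.ne_top hSp) hf₁S hf₂S hf h.left_ne_zero
    (h.pdLE_two hf hS hf₁S hf₂S fun y ↦ ?_)
  obtain ⟨α, hα⟩ := h.exists_sub_coordHom_mul_mem hpmin he he₃ y
  exact ⟨α, fun q hq ↦ hα q (hSp (Ideal.subset_span hq))⟩

/-- over an algebraically closed field, a height two ideal generated by
quadrics contained in a prime `p` with `ht p = 2` and `e(R/p) = 3` has `pd(R/I) = 2`. -/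
theorem stmt4 (K : Type u) [Field K] [IsAlgClosed K] (N : ℕ)
    (I : Ideal (MvPolynomial (Fin N) K)) (S : Set (MvPolynomial (Fin N) K))
    (hS : ∀ f ∈ S, MvPolynomial.IsHomogeneous f 2)
    (hI : I = Ideal.span S)
    (hht : idealHeight I = 2)
    (p : Ideal (MvPolynomial (Fin N) K)) (hp : p.IsPrime) (hIp : I ≤ p)
    (hpht : idealHeight p = 2)
    (hpe : IsHSMultiplicity (MvPolynomial (Fin N) K) (maxIdeal K (Fin N)) p 3) :
    projDim (MvPolynomial (Fin N) K) (MvPolynomial (Fin N) K ⧸ I) = (2 : ℕ∞) := by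
  subst hI
  exact stmt4_general hS hht hp hIp hpht le_rfl hpe
end

section
/- Let R be a polynomial ring over a field K and let I be an ideal generated by n quadrics that is contained in a prime ideal p of height two and multiplicity two, i.e., p = (x, q) where x is a linear form and q is an irreducible quadric with ht(x, q) = 2. Then pd(R/I) ≤ n. -/
open MvPolynomial Filter

universe u

/-!
Let `x`, `q` and the generators of `I` be forms of degrees `k`, `k + 1` and `k + 1`.

If `x` divides all generators, then `I = xJ` with `J` generated by `n` linear forms. Otherwise some
generator `f` is not divisible by `x`; it can replace `q`, because `q` occurs in `f` with a nonzero
constant coefficient, and subtracting multiples of `f` from the other generators gives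
`I = xJ + (f)` with `J` generated by `n - 1` linear forms. After cancelling the greatest common
divisor of `x` and `f`, one has `(I : x) = J + (f)` and `I + (x) = (x, f)`, and
`0 → R/(I : x) → R/I → R/(I + (x)) → 0` bounds `pd (R/I)`, since an ideal generated by `m` linear
forms is prime and `R` modulo it has projective dimension at most `m`.
-/

open CategoryTheory

universe v

section ProjectiveDimension

theorem hasProjectiveDimensionLE_mono {C : Type*} [Category* C] [Abelian C] {M : C} {m n : ℕ}
    (hmn : m ≤ n) (h : HasProjectiveDimensionLE M m) : HasProjectiveDimensionLE M n :=
  have := h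
  hasProjectiveDimensionLT_of_ge M (m + 1) (n + 1) (Nat.succ_le_succ hmn)

variable {R : Type u} [CommRing R]

theorem PdLE.of_hasProjectiveDimensionLE {n : ℕ} {M : Type u} [AddCommGroup M] [Module R M]
    (h : HasProjectiveDimensionLE (ModuleCat.of R M) n) : PdLE R n M := by
  induction n generalizing M with
  | zero =>
    rwa [← projective_iff_hasProjectiveDimensionLE_zero, ← IsProjective.iff_projective] at h
  | succ n ih =>
    have surjective := Finsupp.linearCombination_id_surjective R M
    have projective : Projective (ModuleCat.of R (M →₀ R)) :=
      (IsProjective.iff_projective (R := R) (M →₀ R)).mp inferInstance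
    exact ⟨M →₀ R, inferInstance, inferInstance, inferInstance, _, surjective,
      ih (((LinearMap.shortExact_shortComplexKer surjective).hasProjectiveDimensionLT_X₃_iff
        n projective).mp h)⟩

theorem projDim_le_of_hasProjectiveDimensionLE {n : ℕ} {M : Type u} [AddCommGroup M] [Module R M]
    (h : HasProjectiveDimensionLE (ModuleCat.of R M) n) : projDim R M ≤ n :=
  sInf_le ⟨n, .of_hasProjectiveDimensionLE h, rfl⟩

theorem ker_toSpanSingleton_mk (I : Ideal R) (x : R) :
    LinearMap.ker (LinearMap.toSpanSingleton R (R ⧸ I) (Ideal.Quotient.mk I x)) = I.colon {x} := by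
  ext r
  rw [LinearMap.mem_ker, LinearMap.toSpanSingleton_apply, Submodule.mem_colon_singleton]
  exact Submodule.Quotient.mk_eq_zero I (x := r • x)

/-- The map `R/(I : x) → R/I` induced by multiplication by `x`, the first map of
`colonShortComplex`. -/
def colonQuotientMap (I : Ideal R) (x : R) : (R ⧸ I.colon {x}) →ₗ[R] R ⧸ I :=
  (I.colon {x}).liftQ (LinearMap.toSpanSingleton R (R ⧸ I) (Ideal.Quotient.mk I x))
    (ker_toSpanSingleton_mk I x).ge

theorem colonQuotientMap_injective (I : Ideal R) (x : R) :
    Function.Injective (colonQuotientMap I x) :=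
  LinearMap.ker_eq_bot.mp
    (Submodule.ker_liftQ_eq_bot _ _ _ (ker_toSpanSingleton_mk I x).le)

theorem exact_colonQuotientMap_factor (I : Ideal R) (x : R) :
    Function.Exact (colonQuotientMap I x)
      (Submodule.factor (le_sup_left : I ≤ I ⊔ Ideal.span {x})) := by
  rw [LinearMap.exact_iff, colonQuotientMap, Submodule.range_liftQ, LinearMap.range_toSpanSingleton,
    Submodule.factor, Submodule.ker_mapQ, Submodule.comap_id, Submodule.map_sup,
    Submodule.mkQ_map_self, bot_sup_eq, Ideal.span, Submodule.map_span, Set.image_singleton]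
  rfl

/-- The short exact sequence `0 → R/(I : x) → R/I → R/(I + (x)) → 0`, along which projective
dimensions are compared. -/
def colonShortComplex (I : Ideal R) (x : R) : ShortComplex (ModuleCat.{u} R) :=
  ModuleCat.shortComplexOfCompEqZero (colonQuotientMap I x)
    (Submodule.factor (le_sup_left : I ≤ I ⊔ Ideal.span {x}))
    (exact_colonQuotientMap_factor I x).linearMap_comp_eq_zero

theorem colonShortComplex_shortExact (I : Ideal R) (x : R) : (colonShortComplex I x).ShortExact :=
  ModuleCat.shortComplex_shortExact _ (exact_colonQuotientMap_factor I x)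
    (colonQuotientMap_injective I x) (Submodule.factor_surjective le_sup_left)

theorem hasProjectiveDimensionLE_quotient_of_colon_of_sup {I : Ideal R} {x : R} {n : ℕ}
    (hcolon : HasProjectiveDimensionLE (ModuleCat.of R (R ⧸ I.colon {x})) n)
    (hsup : HasProjectiveDimensionLE (ModuleCat.of R (R ⧸ I ⊔ Ideal.span {x})) n) :
    HasProjectiveDimensionLE (ModuleCat.of R (R ⧸ I)) n :=
  (colonShortComplex_shortExact I x).hasProjectiveDimensionLT_X₂ (n + 1) hcolon hsup

theorem hasProjectiveDimensionLE_quotient_sup_span_singleton {I : Ideal R} {x : R} {n : ℕ}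
    (h : HasProjectiveDimensionLE (ModuleCat.of R (R ⧸ I)) n) (hx : I.colon {x} = I) :
    HasProjectiveDimensionLE (ModuleCat.of R (R ⧸ I ⊔ Ideal.span {x})) (n + 1) :=
  (colonShortComplex_shortExact I x).hasProjectiveDimensionLT_X₃ (n + 1)
    (show HasProjectiveDimensionLE (ModuleCat.of R (R ⧸ I.colon {x})) n by rwa [hx])
    (hasProjectiveDimensionLE_mono n.le_succ h)

theorem hasProjectiveDimensionLE_quotient_sup_span_singleton_of_isPrime {P : Ideal R} [P.IsPrime]
    (x : R) {n : ℕ} (h : HasProjectiveDimensionLE (ModuleCat.of R (R ⧸ P)) n) :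
    HasProjectiveDimensionLE (ModuleCat.of R (R ⧸ P ⊔ Ideal.span {x})) (n + 1) := by
  by_cases hx : x ∈ P
  · rw [sup_eq_left.mpr ((Ideal.span_singleton_le_iff_mem P).mpr hx)]
    exact hasProjectiveDimensionLE_mono n.le_succ h
  · refine hasProjectiveDimensionLE_quotient_sup_span_singleton h (Ideal.ext fun r ↦ ?_)
    rw [Submodule.mem_colon_singleton, smul_eq_mul, Ideal.IsPrime.mul_mem_right_iff hx]

theorem hasProjectiveDimensionLE_quotient_bot (n : ℕ) :
    HasProjectiveDimensionLE (ModuleCat.of R (R ⧸ (⊥ : Ideal R))) n := by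
  have : Module.Projective R (R ⧸ (⊥ : Ideal R)) :=
    .of_equiv (Submodule.quotEquivOfEqBot (⊥ : Ideal R) rfl).symm
  have : Projective (ModuleCat.of R (R ⧸ (⊥ : Ideal R))) :=
    (IsProjective.iff_projective _).mp this
  infer_instance

theorem hasProjectiveDimensionLE_quotient_span_singleton [IsDomain R] (x : R) :
    HasProjectiveDimensionLE (ModuleCat.of R (R ⧸ Ideal.span {x})) 1 := by
  rw [← bot_sup_eq (Ideal.span {x})]
  exact hasProjectiveDimensionLE_quotient_sup_span_singleton_of_isPrime x
    (hasProjectiveDimensionLE_quotient_bot 0)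

theorem colon_span_singleton_mul_self [IsDomain R] {x : R} (hx : x ≠ 0) (J : Ideal R) :
    (Ideal.span {x} * J).colon {x} = J := by
  ext r
  rw [Submodule.mem_colon_singleton, smul_eq_mul, mul_comm r, Ideal.mem_span_singleton_mul]
  exact ⟨fun ⟨z, hz, h⟩ ↦ mul_left_cancel₀ hx h ▸ hz, fun h ↦ ⟨r, h, rfl⟩⟩

theorem hasProjectiveDimensionLE_quotient_span_singleton_mul [IsDomain R] (x : R) {J : Ideal R}
    {n : ℕ} (hn : 1 ≤ n) (h : HasProjectiveDimensionLE (ModuleCat.of R (R ⧸ J)) n) :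
    HasProjectiveDimensionLE (ModuleCat.of R (R ⧸ Ideal.span {x} * J)) n := by
  obtain rfl | hx := eq_or_ne x 0
  · rw [Ideal.span_singleton_zero, Ideal.bot_mul]
    exact hasProjectiveDimensionLE_quotient_bot n
  · refine hasProjectiveDimensionLE_quotient_of_colon_of_sup (x := x) ?_ ?_
    · rwa [colon_span_singleton_mul_self hx]
    · rw [sup_eq_right.mpr Ideal.mul_le_left]
      exact hasProjectiveDimensionLE_mono hn (hasProjectiveDimensionLE_quotient_span_singleton x)

theorem colon_span_singleton_of_isRelPrime [DecompositionMonoid R] {x y : R}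
    (h : IsRelPrime x y) : (Ideal.span {x}).colon {y} = Ideal.span {x} := by
  ext r
  simp only [Submodule.mem_colon_singleton, smul_eq_mul, Ideal.mem_span_singleton]
  exact ⟨h.dvd_of_dvd_mul_right, fun hr ↦ hr.mul_right y⟩

theorem hasProjectiveDimensionLE_quotient_span_pair [IsDomain R] [DecompositionMonoid R] {x y : R}
    (h : IsRelPrime x y) :
    HasProjectiveDimensionLE (ModuleCat.of R (R ⧸ Ideal.span {x} ⊔ Ideal.span {y})) 2 :=
  hasProjectiveDimensionLE_quotient_sup_span_singleton
    (hasProjectiveDimensionLE_quotient_span_singleton x) (colon_span_singleton_of_isRelPrime h)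

theorem colon_span_singleton_mul_sup_span_singleton [IsDomain R] [DecompositionMonoid R] {x y : R}
    (hx : x ≠ 0) (h : IsRelPrime x y) (J : Ideal R) :
    (Ideal.span {x} * J ⊔ Ideal.span {y}).colon {x} = J ⊔ Ideal.span {y} := by
  ext r
  simp only [Submodule.mem_colon_singleton, smul_eq_mul, Ideal.mem_span_singleton_sup,
    sup_comm _ (Ideal.span {y}), Ideal.mem_span_singleton_mul]
  constructor
  · rintro ⟨a, _, ⟨j, hj, rfl⟩, hr⟩
    obtain ⟨b, rfl⟩ : x ∣ a := h.dvd_of_dvd_mul_right ⟨r - j, by linear_combination hr⟩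
    exact ⟨b, j, hj, mul_left_cancel₀ hx (by linear_combination hr)⟩
  · rintro ⟨b, j, hj, rfl⟩
    exact ⟨x * b, x * j, ⟨j, hj, rfl⟩, by ring⟩

theorem hasProjectiveDimensionLE_quotient_span_singleton_mul_sup_of_isRelPrime [IsDomain R]
    [DecompositionMonoid R] {x y : R} (hx : x ≠ 0) (hxy : IsRelPrime x y) {J : Ideal R}
    {n : ℕ} (hn : 2 ≤ n)
    (h : HasProjectiveDimensionLE (ModuleCat.of R (R ⧸ J ⊔ Ideal.span {y})) n) :
    HasProjectiveDimensionLE (ModuleCat.of R (R ⧸ Ideal.span {x} * J ⊔ Ideal.span {y})) n := by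
  refine hasProjectiveDimensionLE_quotient_of_colon_of_sup (x := x) ?_ ?_
  · rwa [colon_span_singleton_mul_sup_span_singleton hx hxy]
  · rw [sup_right_comm, sup_eq_right.mpr (Ideal.mul_le_left (J := J))]
    exact hasProjectiveDimensionLE_mono hn (hasProjectiveDimensionLE_quotient_span_pair hxy)

theorem hasProjectiveDimensionLE_quotient_span_singleton_mul_sup [IsDomain R]
    [UniqueFactorizationMonoid R] (x y : R) {J : Ideal R} {n : ℕ} (hn : 2 ≤ n)
    (h : ∀ z, HasProjectiveDimensionLE (ModuleCat.of R (R ⧸ J ⊔ Ideal.span {z})) n) :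
    HasProjectiveDimensionLE (ModuleCat.of R (R ⧸ Ideal.span {x} * J ⊔ Ideal.span {y})) n := by
  obtain rfl | hx := eq_or_ne x 0
  · rw [Ideal.span_singleton_zero, Ideal.bot_mul, bot_sup_eq]
    exact hasProjectiveDimensionLE_mono (by omega)
      (hasProjectiveDimensionLE_quotient_span_singleton y)
  · obtain ⟨x', y', d, hxy, rfl, rfl⟩ := UniqueFactorizationMonoid.exists_reduced_factors x hx y
    rw [← Ideal.span_singleton_mul_span_singleton, ← Ideal.span_singleton_mul_span_singleton,
      mul_assoc, ← Ideal.mul_sup]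
    exact hasProjectiveDimensionLE_quotient_span_singleton_mul d (by omega)
      (hasProjectiveDimensionLE_quotient_span_singleton_mul_sup_of_isRelPrime
        (right_ne_zero_of_mul hx) hxy hn (h y'))

end ProjectiveDimension

section SpanRange

variable {R : Type*} [CommRing R]

theorem span_range_eq_span_singleton_mul {ι : Type*} {g l : ι → R} {x : R}
    (h : ∀ i, g i = l i * x) :
    Ideal.span (Set.range g) = Ideal.span {x} * Ideal.span (Set.range l) := by
  rw [Ideal.span_mul_span', Set.singleton_mul, ← Set.range_comp]
  congr 2
  ext i
  simp [h i, mul_comm]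

theorem span_range_succAbove_sup {n : ℕ} (g : Fin (n + 1) → R) (i : Fin (n + 1)) :
    Ideal.span (Set.range fun j ↦ g (i.succAbove j)) ⊔ Ideal.span {g i} =
      Ideal.span (Set.range g) := by
  rw [← Ideal.span_union, Set.union_singleton, ← Function.comp_def, Set.range_comp,
    Fin.range_succAbove, ← Set.image_insert_eq]
  simp [Set.insert_eq]

theorem span_range_add_mul_sup {ι : Type*} (a b : ι → R) (y : R) :
    Ideal.span (Set.range fun i ↦ a i + b i * y) ⊔ Ideal.span {y} =
      Ideal.span (Set.range a) ⊔ Ideal.span {y} := by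
  have hy (J : Ideal R) (c : R) : c * y ∈ J ⊔ Ideal.span {y} :=
    Ideal.mul_mem_left _ _ (Ideal.mem_sup_right (Ideal.mem_span_singleton_self y))
  refine le_antisymm ?_ ?_ <;>
    refine sup_le (Ideal.span_le.mpr (Set.range_subset_iff.mpr fun i ↦ ?_)) le_sup_right
  · exact add_mem (Ideal.mem_sup_left (Ideal.subset_span ⟨i, rfl⟩)) (hy _ _)
  · rw [SetLike.mem_coe, ← add_sub_cancel_right (a i) (b i * y)]
    exact sub_mem (Ideal.mem_sup_left (Ideal.subset_span ⟨i, rfl⟩)) (hy _ _)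

theorem span_range_eq_span_singleton_mul_sup {n : ℕ} {g : Fin (n + 1) → R} {i : Fin (n + 1)}
    {l b : Fin (n + 1) → R} {x : R} (h : ∀ j, g j = l j * x + b j * g i) :
    Ideal.span (Set.range g) =
      Ideal.span {x} * Ideal.span (Set.range fun j ↦ l (i.succAbove j)) ⊔ Ideal.span {g i} := by
  rw [← span_range_eq_span_singleton_mul fun _ ↦ rfl, ← span_range_add_mul_sup _
    (fun j ↦ b (i.succAbove j)), ← span_range_succAbove_sup g i]
  simp only [← h]

end SpanRange

section Homogeneous

variable {R : Type*} [CommSemiring R] {σ : Type*}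

theorem homogeneousComponent_add_mul_of_isHomogeneous (a : MvPolynomial σ R) (i : ℕ) {j : ℕ}
    {b : MvPolynomial σ R} (hb : b.IsHomogeneous j) :
    homogeneousComponent (i + j) (a * b) = homogeneousComponent i a * b := by
  let := MvPolynomial.gradedAlgebra (σ := σ) (R := R)
  have h := DirectSum.coe_decompose_mul_add_of_right_mem (homogeneousSubmodule σ R)
    (i := i) (a := a) hb
  rwa [← DirectSum.Decomposition.decompose'_eq, decomposition.decompose'_apply,
    decomposition.decompose'_apply] at h

theorem exists_isHomogeneous_eq_mul_of_dvd {i j : ℕ} {x f : MvPolynomial σ R}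
    (hx : x.IsHomogeneous j) (hf : f.IsHomogeneous (i + j)) (h : x ∣ f) :
    ∃ l : MvPolynomial σ R, l.IsHomogeneous i ∧ f = l * x := by
  obtain ⟨a, rfl⟩ := h
  refine ⟨homogeneousComponent i a, homogeneousComponent_isHomogeneous _ _, ?_⟩
  rw [← homogeneousComponent_add_mul_of_isHomogeneous a i hx, mul_comm a,
    homogeneousComponent_eq_self hf]

theorem exists_isHomogeneous_eq_mul_add_C_mul {i j : ℕ} {x q f : MvPolynomial σ R}
    (hx : x.IsHomogeneous j) (hq : q.IsHomogeneous (i + j)) (hf : f.IsHomogeneous (i + j))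
    (h : f ∈ Ideal.span {x, q}) :
    ∃ (l : MvPolynomial σ R) (c : R), l.IsHomogeneous i ∧ f = l * x + C c * q := by
  obtain ⟨a, b, rfl⟩ := Ideal.mem_span_pair.mp h
  refine ⟨homogeneousComponent i a, coeff 0 b, homogeneousComponent_isHomogeneous _ _, ?_⟩
  rw [← homogeneousComponent_zero, ← homogeneousComponent_add_mul_of_isHomogeneous a i hx,
    ← homogeneousComponent_add_mul_of_isHomogeneous b 0 hq, zero_add, ← map_add,
    homogeneousComponent_eq_self hf]

theorem span_pair_le_span_pair_of_not_dvd {K : Type*} [Field K] {i j : ℕ}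
    {x q f : MvPolynomial σ K} (hx : x.IsHomogeneous j) (hq : q.IsHomogeneous (i + j))
    (hf : f.IsHomogeneous (i + j)) (hmem : f ∈ Ideal.span {x, q}) (hdvd : ¬ x ∣ f) :
    Ideal.span {x, q} ≤ Ideal.span {x, f} := by
  obtain ⟨l, c, -, rfl⟩ := exists_isHomogeneous_eq_mul_add_C_mul hx hq hf hmem
  have hc : c ≠ 0 := by
    rintro rfl
    simp at hdvd
  have hcc : (C c⁻¹ * C c : MvPolynomial σ K) = 1 := by rw [← C_mul, inv_mul_cancel₀ hc, C_1]
  rw [Ideal.span_le, Set.pair_subset_iff]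
  exact ⟨Ideal.subset_span (Set.mem_insert _ _), Ideal.mem_span_pair.mpr
    ⟨-(C c⁻¹ * l), C c⁻¹, by linear_combination q * hcc⟩⟩

end Homogeneous

section LinearForms

variable {K : Type u} [Field K] {σ : Type v}

theorem sub_apply_mem_of_forall_X {R : Type*} [CommRing R]
    {J : Ideal (MvPolynomial σ R)} {φ : MvPolynomial σ R →ₐ[R] MvPolynomial σ R}
    (h : ∀ i, X i - φ (X i) ∈ J) (f : MvPolynomial σ R) : f - φ f ∈ J := by
  have mk_eq_mk_comp : Ideal.Quotient.mkₐ R J = (Ideal.Quotient.mkₐ R J).comp φ :=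
    algHom_ext fun i ↦ Ideal.Quotient.eq.mpr (h i)
  exact Ideal.Quotient.eq.mp (AlgHom.congr_fun mk_eq_mk_comp f)

theorem isPrime_span_of_isHomogeneous_one {S : Set (MvPolynomial σ K)}
    (hS : ∀ l ∈ S, l.IsHomogeneous 1) : (Ideal.span S).IsPrime := by
  -- Extend a linear projection with kernel `span K S` to an endomorphism `φ` of the polynomial
  -- ring: `φ` kills `S` and is the identity modulo `S`, so its kernel is `Ideal.span S`.
  obtain ⟨W, hW⟩ := (Submodule.span K S).exists_isCompl
  let p : MvPolynomial σ K →ₗ[K] MvPolynomial σ K := W.projection _ hW.symm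
  let φ : MvPolynomial σ K →ₐ[K] MvPolynomial σ K := aeval fun i ↦ p (X i)
  have φ_eq_p {l : MvPolynomial σ K} (hl : l.IsHomogeneous 1) : φ l = p l := by
    rw [← mem_homogeneousSubmodule, homogeneousSubmodule_one_eq_span_X] at hl
    refine LinearMap.eqOn_span (f := φ.toLinearMap) ?_ hl
    rintro _ ⟨i, rfl⟩
    exact aeval_X _ i
  have span_le_ker : Ideal.span S ≤ RingHom.ker φ := Ideal.span_le.mpr fun l hl ↦ by
    rw [SetLike.mem_coe, RingHom.mem_ker, φ_eq_p (hS l hl),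
      Submodule.projection_apply_eq_zero_iff]
    exact Submodule.subset_span hl
  have sub_φ_mem : ∀ f, f - φ f ∈ Ideal.span S := sub_apply_mem_of_forall_X fun i ↦ by
    rw [aeval_X]
    exact Submodule.span_le_restrictScalars K _ S (Submodule.sub_projection_mem hW.symm (X i))
  have ker_le_span : RingHom.ker φ ≤ Ideal.span S := fun f hf ↦ by
    simpa [(RingHom.mem_ker).mp hf] using sub_φ_mem f
  rw [le_antisymm span_le_ker ker_le_span]
  exact RingHom.ker_isPrime _

theorem hasProjectiveDimensionLE_quotient_span_range_of_isHomogeneous_one {n : ℕ}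
    {l : Fin n → MvPolynomial σ K} (hl : ∀ i, (l i).IsHomogeneous 1) :
    HasProjectiveDimensionLE
      (ModuleCat.of (MvPolynomial σ K) (MvPolynomial σ K ⧸ Ideal.span (Set.range l))) n := by
  induction n with
  | zero =>
    rw [Set.range_eq_empty, Ideal.span_empty]
    exact hasProjectiveDimensionLE_quotient_bot 0
  | succ n ih =>
    rw [← span_range_succAbove_sup l 0]
    have := isPrime_span_of_isHomogeneous_one
      (Set.forall_mem_range.mpr fun j ↦ hl ((0 : Fin (n + 1)).succAbove j))
    exact hasProjectiveDimensionLE_quotient_sup_span_singleton_of_isPrime _ (ih fun j ↦ hl _)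

theorem hasProjectiveDimensionLE_quotient_span_singleton_mul_span_range_sup
    {n : ℕ} (x y : MvPolynomial σ K) {l : Fin n → MvPolynomial σ K}
    (hl : ∀ i, (l i).IsHomogeneous 1) :
    HasProjectiveDimensionLE (ModuleCat.of (MvPolynomial σ K)
      (MvPolynomial σ K ⧸ Ideal.span {x} * Ideal.span (Set.range l) ⊔ Ideal.span {y})) (n + 1) := by
  obtain rfl | hn := Nat.eq_zero_or_pos n
  · rw [Set.range_eq_empty, Ideal.span_empty, Ideal.mul_bot, bot_sup_eq]
    exact hasProjectiveDimensionLE_quotient_span_singleton y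
  · have := isPrime_span_of_isHomogeneous_one (Set.forall_mem_range.mpr hl)
    exact hasProjectiveDimensionLE_quotient_span_singleton_mul_sup x y (by omega) fun z ↦
      hasProjectiveDimensionLE_quotient_sup_span_singleton_of_isPrime z
        (hasProjectiveDimensionLE_quotient_span_range_of_isHomogeneous_one hl)

theorem stmt5_general {k n : ℕ} {x q : MvPolynomial σ K} (hx : x.IsHomogeneous k)
    (hq : q.IsHomogeneous (1 + k)) {g : Fin n → MvPolynomial σ K}
    (hg : ∀ i, (g i).IsHomogeneous (1 + k))
    (hle : Ideal.span (Set.range g) ≤ Ideal.span {x, q}) :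
    projDim (MvPolynomial σ K) (MvPolynomial σ K ⧸ Ideal.span (Set.range g)) ≤ n := by
  apply projDim_le_of_hasProjectiveDimensionLE
  have hmem (i) : g i ∈ Ideal.span {x, q} := hle (Ideal.subset_span ⟨i, rfl⟩)
  obtain _ | n := n
  · rw [Set.range_eq_empty, Ideal.span_empty]
    exact hasProjectiveDimensionLE_quotient_bot 0
  by_cases hdvd : ∀ i, x ∣ g i
  · choose l hl hgl using fun i ↦ exists_isHomogeneous_eq_mul_of_dvd hx (hg i) (hdvd i)
    rw [span_range_eq_span_singleton_mul hgl]
    exact hasProjectiveDimensionLE_quotient_span_singleton_mul x (by omega)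
      (hasProjectiveDimensionLE_quotient_span_range_of_isHomogeneous_one hl)
  · obtain ⟨i, hi⟩ := not_forall.mp hdvd
    have hexchange := span_pair_le_span_pair_of_not_dvd hx hq (hg i) (hmem i) hi
    choose l c hl hgl using fun j ↦
      exists_isHomogeneous_eq_mul_add_C_mul hx (hg i) (hg j) (hexchange (hmem j))
    rw [span_range_eq_span_singleton_mul_sup hgl]
    exact hasProjectiveDimensionLE_quotient_span_singleton_mul_span_range_sup x (g i)
      fun j ↦ hl (i.succAbove j)

end LinearForms

/-- an ideal generated by `n` quadrics contained in a prime of height two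
and multiplicity two, i.e. `p = (x, q)` with `x` a linear form and `q` an irreducible
quadric, has `pd(R/I) ≤ n`. -/
theorem stmt5 (K : Type u) [Field K] (N n : ℕ)
    (x q : MvPolynomial (Fin N) K) (hx : x.IsHomogeneous 1) (hq : q.IsHomogeneous 2)
    (hqirr : Irreducible q)
    (hprime : (Ideal.span {x, q}).IsPrime)
    (hht : idealHeight (Ideal.span {x, q}) = 2)
    (I : Ideal (MvPolynomial (Fin N) K)) (g : Fin n → MvPolynomial (Fin N) K)
    (hg : ∀ i, (g i).IsHomogeneous 2)
    (hI : I = Ideal.span (Set.range g))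
    (hle : I ≤ Ideal.span {x, q}) :
    projDim (MvPolynomial (Fin N) K) (MvPolynomial (Fin N) K ⧸ I) ≤ (n : ℕ∞) := by
  subst hI
  exact stmt5_general hx hq hg hle
end
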